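/- arXiv:math/0104011 — 5 statements merged into one kernel-verified Lean document; each statement's English description precedes it below -/
import Mathlib

section
/- For every positive integer m there exist an integer d ≥ 1, integers a_0, …, a_d not all zero, and a function t : ℤ → ℤ such that (i) ∑_{j=0}^{d} a_j · t(n+j) = 0 for every n ∈ ℤ, (ii) t(n) = T(m,n) for every n ≥ 1, and (iii) t(−2−n) = ε_{m,n} · t(n) for every n ∈ ℤ. (Thus the matching counts T(m,n), extrapolated to negative n by a linear recurrence, satisfy the reciprocity relation T(m,−2−n) = ε_{m,n} T(m,n).) -/
open Finset

/-- The m-by-n grid graph on `Fin m × Fin n`: vertices are adjacent iff they agree in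
one coordinate and differ by exactly 1 in the other. -/
def grid (m n : ℕ) : SimpleGraph (Fin m × Fin n) :=
  SimpleGraph.fromRel (fun p q =>
    (p.1 = q.1 ∧ (p.2 : ℕ) + 1 = q.2) ∨ (p.2 = q.2 ∧ (p.1 : ℕ) + 1 = q.1))

/-- A perfect matching: a set of edges of `G` such that every vertex belongs to
exactly one edge of the set. -/
def IsPM {V : Type*} (G : SimpleGraph V) (P : Finset (Sym2 V)) : Prop :=
  (∀ e ∈ P, e ∈ G.edgeSet) ∧ ∀ v : V, ∃! e, e ∈ P ∧ v ∈ e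

/-- `T m n` is the number of perfect matchings of the m-by-n grid graph. -/
noncomputable def T (m n : ℕ) : ℕ :=
  {P : Finset (Sym2 (Fin m × Fin n)) | IsPM (grid m n) P}.ncard

/-- ε_{m,n}: -1 if m ≡ 2 (mod 4) and n is odd, +1 otherwise. -/
def eps (m : ℕ) (n : ℤ) : ℤ := if m % 4 = 2 ∧ Odd n then -1 else 1

/-!
The `n`-th power of the transfer matrix `M` of a finite graph `G`, indexed by the subsets of `V`,
has `(∅, ∅)`-entry equal to the number of perfect matchings of `G □ pathGraph n`. Colouring the
edges of a matching with two colours, one of which carries the sign `-1`, gives the cancellation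
`∑_{A ⊆ R} (-1)^(#A / 2) pm(A) pm(R \ A) = [R = ∅]`, which says precisely that `M` is invertible
over `ℤ` and that `M⁻¹` is, up to signs, `M` with all indices complemented. So `M ^ n` makes sense
for all integers `n` and obeys the recurrence given by Cayley–Hamilton, and `(M ^ (-2 - n)) ∅ ∅` is
up to sign `(M ^ (n + 2)) univ univ`. The latter equals `(M ^ n) ∅ ∅`, because a fully occupied
first or last layer only passes the empty set on. In the product of the signs along a chain of
subsets, the parities of their sizes are forced, so that a sign depending only on `#V` and `n`
remains.
-/

section EdgeMatching

variable {V W : Type*} {G : SimpleGraph V} {H : SimpleGraph W} {P Q : Finset (Sym2 V)}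

/-- A matching of `G`, given as a finite set of pairwise disjoint edges. -/
structure IsEdgeMatching (G : SimpleGraph V) (P : Finset (Sym2 V)) : Prop where
  mem_edgeSet : ∀ e ∈ P, e ∈ G.edgeSet
  eq_of_mem : ∀ e ∈ P, ∀ f ∈ P, ∀ v, v ∈ e → v ∈ f → e = f

theorem isEdgeMatching_empty : IsEdgeMatching G ∅ := by
  constructor <;> simp

theorem IsEdgeMatching.mono (hQ : IsEdgeMatching G Q) (hPQ : P ⊆ Q) : IsEdgeMatching G P where
  mem_edgeSet e he := hQ.mem_edgeSet e (hPQ he)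
  eq_of_mem e he f hf := hQ.eq_of_mem e (hPQ he) f (hPQ hf)

theorem isEdgeMatching_map (f : G ↪g H) :
    IsEdgeMatching H (P.map f.toEmbedding.sym2Map) ↔ IsEdgeMatching G P := by
  have mem_edgeSet_map (e : Sym2 V) : e.map f ∈ H.edgeSet ↔ e ∈ G.edgeSet := by
    induction e with
    | h a b => exact f.map_adj_iff
  have mem_map (e : Sym2 V) (w : W) : w ∈ e.map f ↔ ∃ v ∈ e, f v = w := Sym2.mem_map
  have map_inj (e e' : Sym2 V) : e.map f = e'.map f ↔ e = e' :=
    (Sym2.map.injective f.injective).eq_iff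
  constructor
  · rintro ⟨hedge, hdisj⟩
    simp only [Finset.forall_mem_map, Function.Embedding.sym2Map_apply,
      RelEmbedding.coe_toEmbedding, mem_edgeSet_map, map_inj] at hedge hdisj
    exact ⟨hedge, fun e he e' he' v hv hv' => hdisj e he e' he' (f v)
      ((mem_map ..).2 ⟨v, hv, rfl⟩) ((mem_map ..).2 ⟨v, hv', rfl⟩)⟩
  · rintro ⟨hedge, hdisj⟩
    refine ⟨?_, ?_⟩ <;>
    simp only [Finset.forall_mem_map, Function.Embedding.sym2Map_apply,
      RelEmbedding.coe_toEmbedding, mem_edgeSet_map, map_inj, mem_map]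
    · exact hedge
    · rintro e he e' he' _ ⟨v, hv, rfl⟩ ⟨w, hw, hwv⟩
      exact hdisj e he e' he' v hv (f.injective hwv ▸ hw)

variable [DecidableEq V] [DecidableEq W] {R : Finset V}

/-- The set of vertices covered by a set of edges. -/
def coveredVerts (P : Finset (Sym2 V)) : Finset V :=
  P.biUnion Sym2.toFinset

theorem mem_coveredVerts {v : V} : v ∈ coveredVerts P ↔ ∃ e ∈ P, v ∈ e := by
  simp [coveredVerts]

theorem coveredVerts_union : coveredVerts (P ∪ Q) = coveredVerts P ∪ coveredVerts Q :=
  union_biUnion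

theorem coveredVerts_subset_iff : coveredVerts P ⊆ R ↔ P ⊆ R.sym2 := by
  simp only [subset_iff, mem_coveredVerts, mem_sym2_iff]
  grind

theorem coveredVerts_eq_empty : coveredVerts P = ∅ ↔ P = ∅ := by
  rw [← subset_empty, coveredVerts_subset_iff, sym2_empty, subset_empty]

theorem coveredVerts_map (f : V ↪ W) :
    coveredVerts (P.map f.sym2Map) = (coveredVerts P).map f := by
  ext w
  simp only [mem_coveredVerts, mem_map, Function.Embedding.sym2Map_apply]
  constructor
  · rintro ⟨_, ⟨e, he, rfl⟩, hw⟩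
    obtain ⟨v, hv, rfl⟩ := Sym2.mem_map.1 hw
    exact ⟨v, ⟨e, he, hv⟩, rfl⟩
  · rintro ⟨v, ⟨e, he, hv⟩, rfl⟩
    exact ⟨_, ⟨e, he, rfl⟩, Sym2.mem_map.2 ⟨v, hv, rfl⟩⟩

theorem disjoint_of_disjoint_coveredVerts (h : Disjoint (coveredVerts P) (coveredVerts Q)) :
    Disjoint P Q := by
  rw [Finset.disjoint_left] at h ⊢
  intro e heP heQ
  induction e with
  | h a b =>
    exact h (mem_coveredVerts.2 ⟨_, heP, Sym2.mem_mk_left a b⟩)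
      (mem_coveredVerts.2 ⟨_, heQ, Sym2.mem_mk_left a b⟩)

theorem IsEdgeMatching.union (hP : IsEdgeMatching G P) (hQ : IsEdgeMatching G Q)
    (hPQ : Disjoint (coveredVerts P) (coveredVerts Q)) : IsEdgeMatching G (P ∪ Q) := by
  simp only [Finset.disjoint_left, mem_coveredVerts] at hPQ
  constructor
  · exact fun e he => (mem_union.1 he).elim (hP.mem_edgeSet e) (hQ.mem_edgeSet e)
  · have := hP.eq_of_mem
    have := hQ.eq_of_mem
    grind

theorem IsEdgeMatching.disjoint_coveredVerts {Z : Finset (Sym2 V)} (hZ : IsEdgeMatching G Z)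
    (hP : P ⊆ Z) (hQ : Q ⊆ Z) (hPQ : Disjoint P Q) :
    Disjoint (coveredVerts P) (coveredVerts Q) := by
  simp only [Finset.disjoint_left, mem_coveredVerts] at hPQ ⊢
  rintro v ⟨e, he, hve⟩ ⟨f, hf, hvf⟩
  exact hPQ he (hZ.eq_of_mem e (hP he) f (hQ hf) v hve hvf ▸ hf)

theorem IsEdgeMatching.coveredVerts_sdiff (hP : IsEdgeMatching G P) (hQP : Q ⊆ P) :
    coveredVerts (P \ Q) = coveredVerts P \ coveredVerts Q := by
  have hunion : coveredVerts P = coveredVerts (P \ Q) ∪ coveredVerts Q := by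
    rw [← coveredVerts_union, sdiff_union_of_subset hQP]
  rw [hunion, union_sdiff_cancel_right]
  exact hP.disjoint_coveredVerts sdiff_subset hQP sdiff_disjoint

theorem IsEdgeMatching.card_coveredVerts (hP : IsEdgeMatching G P) :
    #(coveredVerts P) = 2 * #P := by
  rw [coveredVerts, card_biUnion, sum_congr rfl fun e he =>
    Sym2.card_toFinset_of_not_isDiag e (G.not_isDiag_of_mem_edgeSet (hP.mem_edgeSet e he))]
  · simp [mul_comm]
  · intro e he f hf hne
    simp only [Finset.disjoint_left, Sym2.mem_toFinset]
    exact fun v hve hvf => hne (hP.eq_of_mem e he f hf v hve hvf)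

end EdgeMatching

section PerfectMatching

variable {V W : Type*} [DecidableEq V] [DecidableEq W] {G : SimpleGraph V} {H : SimpleGraph W}
  {P : Finset (Sym2 V)} {X Y R : Finset V}

open Classical in
/-- The perfect matchings of the subgraph of `G` induced on `R`, as sets of edges of `G`. -/
noncomputable def perfectMatchings (G : SimpleGraph V) (R : Finset V) :
    Finset (Finset (Sym2 V)) :=
  {P ∈ R.sym2.powerset | IsEdgeMatching G P ∧ coveredVerts P = R}

theorem mem_perfectMatchings :
    P ∈ perfectMatchings G R ↔ IsEdgeMatching G P ∧ coveredVerts P = R := by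
  simp only [perfectMatchings, mem_filter, mem_powerset, and_iff_right_iff_imp]
  rintro ⟨-, rfl⟩
  exact coveredVerts_subset_iff.1 subset_rfl

theorem empty_mem_perfectMatchings_iff : ∅ ∈ perfectMatchings G R ↔ R = ∅ := by
  rw [mem_perfectMatchings, and_iff_right isEdgeMatching_empty, coveredVerts_eq_empty.2 rfl,
    eq_comm]

theorem perfectMatchings_empty : perfectMatchings G ∅ = {∅} := by
  refine eq_singleton_iff_unique_mem.2 ⟨empty_mem_perfectMatchings_iff.2 rfl, fun P hP => ?_⟩
  exact coveredVerts_eq_empty.1 (mem_perfectMatchings.1 hP).2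

theorem card_eq_two_mul_of_mem_perfectMatchings (hP : P ∈ perfectMatchings G R) :
    #R = 2 * #P := by
  obtain ⟨hmatch, rfl⟩ := mem_perfectMatchings.1 hP
  exact hmatch.card_coveredVerts

theorem card_perfectMatchings_map (f : G ↪g H) :
    #(perfectMatchings H (R.map f.toEmbedding)) = #(perfectMatchings G R) := by
  refine (card_nbij (·.map f.toEmbedding.sym2Map) (fun P hP => ?_)
    (map_injective _).injOn fun P' hP' => ?_).symm
  · obtain ⟨hmatch, rfl⟩ := mem_perfectMatchings.1 hP
    exact mem_perfectMatchings.2 ⟨(isEdgeMatching_map f).2 hmatch, coveredVerts_map _⟩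
  · obtain ⟨hmatch, hcov⟩ := mem_perfectMatchings.1 hP'
    have hsub := coveredVerts_subset_iff.1 hcov.subset
    rw [sym2_map] at hsub
    obtain ⟨P, -, rfl⟩ := subset_map_iff.1 hsub
    rw [coveredVerts_map] at hcov
    exact ⟨P, mem_perfectMatchings.2
      ⟨(isEdgeMatching_map f).1 hmatch, map_injective _ hcov⟩, rfl⟩

-- A pair of perfect matchings of `A` and `R \ A` is a perfect matching of `R` whose edges are
-- coloured with two colours.
theorem sum_powerset_sum_perfectMatchings {M : Type*} [AddCommMonoid M]
    (g : Finset (Sym2 V) → Finset (Sym2 V) → M) :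
    ∑ A ∈ R.powerset, ∑ P ∈ perfectMatchings G A, ∑ Q ∈ perfectMatchings G (R \ A), g P Q =
      ∑ Z ∈ perfectMatchings G R, ∑ P ∈ Z.powerset, g P (Z \ P) := by
  simp only [← sum_product' (perfectMatchings G _), sum_sigma']
  have union_sdiff {A} {P Q : Finset (Sym2 V)} (hP : coveredVerts P = A)
      (hQ : coveredVerts Q = R \ A) : (P ∪ Q) \ P = Q :=
    union_sdiff_cancel_left (disjoint_of_disjoint_coveredVerts (hP ▸ hQ ▸ disjoint_sdiff))
  refine sum_bij' (fun x _ => ⟨x.2.1 ∪ x.2.2, x.2.1⟩)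
    (fun y _ => ⟨coveredVerts y.2, y.2, y.1 \ y.2⟩) ?_ ?_ ?_ ?_ ?_ <;>
  simp only [mem_sigma, mem_product, mem_powerset, mem_perfectMatchings]
  · rintro ⟨A, P, Q⟩ ⟨hA, ⟨hP, hPA⟩, hQ, hQA⟩
    refine ⟨⟨hP.union hQ (hPA ▸ hQA ▸ disjoint_sdiff), ?_⟩, subset_union_left⟩
    rw [coveredVerts_union, hPA, hQA, union_sdiff_of_subset hA]
  · rintro ⟨Z, P⟩ ⟨⟨hZ, rfl⟩, hPZ⟩
    exact ⟨biUnion_subset_biUnion_of_subset_left _ hPZ, ⟨hZ.mono hPZ, trivial⟩,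
      hZ.mono sdiff_subset, hZ.coveredVerts_sdiff hPZ⟩
  · rintro ⟨A, P, Q⟩ ⟨-, ⟨-, hPA⟩, -, hQA⟩
    simp only [union_sdiff hPA hQA, hPA]
  · rintro ⟨Z, P⟩ ⟨-, hPZ⟩
    simp only [union_sdiff_of_subset hPZ]
  · rintro ⟨A, P, Q⟩ ⟨-, ⟨-, hPA⟩, -, hQA⟩
    rw [union_sdiff hPA hQA]

theorem sum_powerset_neg_one_pow_mul_card_perfectMatchings (G : SimpleGraph V) (R : Finset V) :
    ∑ A ∈ R.powerset, (-1 : ℤ) ^ (#A / 2) * #(perfectMatchings G A) *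
      #(perfectMatchings G (R \ A)) = if R = ∅ then 1 else 0 := by
  calc
    _ = ∑ A ∈ R.powerset, ∑ P ∈ perfectMatchings G A, ∑ _Q ∈ perfectMatchings G (R \ A),
          (-1 : ℤ) ^ #P := by
        refine sum_congr rfl fun A _ => ?_
        have card_half (P) (hP : P ∈ perfectMatchings G A) : #P = #A / 2 := by
          rw [card_eq_two_mul_of_mem_perfectMatchings hP, Nat.mul_div_cancel_left _ two_pos]
        rw [sum_congr rfl fun P hP => by rw [card_half P hP]]
        simp only [sum_const, nsmul_eq_mul]
        ring
    _ = ∑ Z ∈ perfectMatchings G R, if Z = ∅ then 1 else 0 := by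
        rw [sum_powerset_sum_perfectMatchings fun P _ => (-1 : ℤ) ^ #P]
        simp only [sum_powerset_neg_one_pow_card]
    _ = if R = ∅ then 1 else 0 := by
        rw [sum_ite_eq']
        exact if_congr empty_mem_perfectMatchings_iff rfl rfl

open Classical in
/-- The matchings of `G` all of whose edges join `X` to `Y`, for disjoint `X` and `Y`. -/
noncomputable def crossingMatchings (G : SimpleGraph V) (X Y : Finset V) :
    Finset (Finset (Sym2 V)) :=
  {C ∈ ((X ∪ Y).sym2 \ (X.sym2 ∪ Y.sym2)).powerset | IsEdgeMatching G C}

theorem mem_crossingMatchings {C : Finset (Sym2 V)} : C ∈ crossingMatchings G X Y ↔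
    C ⊆ (X ∪ Y).sym2 \ (X.sym2 ∪ Y.sym2) ∧ IsEdgeMatching G C := by
  simp only [crossingMatchings, mem_filter, mem_powerset]

theorem union_mem_perfectMatchings {C P Q : Finset (Sym2 V)} (hXY : Disjoint X Y)
    (hC : C ∈ crossingMatchings G X Y) (hP : P ∈ perfectMatchings G (X \ coveredVerts C))
    (hQ : Q ∈ perfectMatchings G (Y \ coveredVerts C)) :
    C ∪ (P ∪ Q) ∈ perfectMatchings G (X ∪ Y) := by
  obtain ⟨hCsub, hC⟩ := mem_crossingMatchings.1 hC
  obtain ⟨hP, hPcov⟩ := mem_perfectMatchings.1 hP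
  obtain ⟨hQ, hQcov⟩ := mem_perfectMatchings.1 hQ
  have hCcov : coveredVerts C ⊆ X ∪ Y := coveredVerts_subset_iff.2 (hCsub.trans sdiff_subset)
  have hPQ := hP.union hQ (hPcov ▸ hQcov ▸ hXY.mono sdiff_subset sdiff_subset)
  have hPQcov : coveredVerts (P ∪ Q) = (X ∪ Y) \ coveredVerts C := by
    rw [coveredVerts_union, hPcov, hQcov, union_sdiff_distrib]
  rw [mem_perfectMatchings, coveredVerts_union, hPQcov, union_sdiff_of_subset hCcov]
  exact ⟨hC.union hPQ (hPQcov ▸ disjoint_sdiff), rfl⟩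

theorem inter_sym2_mem_perfectMatchings {Z : Finset (Sym2 V)} (hXY : Disjoint X Y)
    (hZ : Z ∈ perfectMatchings G (X ∪ Y)) :
    Z ∩ X.sym2 ∈ perfectMatchings G (X \ coveredVerts (Z \ (X.sym2 ∪ Y.sym2))) := by
  obtain ⟨hZ, hZcov⟩ := mem_perfectMatchings.1 hZ
  refine mem_perfectMatchings.2 ⟨hZ.mono inter_subset_left, subset_antisymm ?_ fun v hv => ?_⟩
  · refine subset_sdiff.2 ⟨coveredVerts_subset_iff.2 inter_subset_right, ?_⟩
    exact hZ.disjoint_coveredVerts inter_subset_left sdiff_subset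
      (disjoint_sdiff.mono_left (inter_subset_right.trans subset_union_left))
  · obtain ⟨hvX, hv⟩ := mem_sdiff.1 hv
    obtain ⟨e, he, hve⟩ := mem_coveredVerts.1 (hZcov ▸ mem_union_left Y hvX)
    have heY : e ∉ Y.sym2 := fun h => Finset.disjoint_left.1 hXY hvX (mem_sym2_iff.1 h v hve)
    have heX : e ∈ X.sym2 := by
      by_contra heX
      exact hv (mem_coveredVerts.2 ⟨e, by simp [he, heX, heY], hve⟩)
    exact mem_coveredVerts.2 ⟨e, mem_inter.2 ⟨he, heX⟩, hve⟩

theorem sdiff_mem_crossingMatchings {Z : Finset (Sym2 V)} (hZ : Z ∈ perfectMatchings G (X ∪ Y)) :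
    Z \ (X.sym2 ∪ Y.sym2) ∈ crossingMatchings G X Y := by
  obtain ⟨hZ, hZcov⟩ := mem_perfectMatchings.1 hZ
  exact mem_crossingMatchings.2 ⟨sdiff_subset_sdiff (coveredVerts_subset_iff.1 hZcov.subset)
    subset_rfl, hZ.mono sdiff_subset⟩

theorem subset_sym2_of_mem_perfectMatchings (hP : P ∈ perfectMatchings G R) : P ⊆ R.sym2 :=
  coveredVerts_subset_iff.1 (mem_perfectMatchings.1 hP).2.subset

theorem card_perfectMatchings_union (hXY : Disjoint X Y) :
    #(perfectMatchings G (X ∪ Y)) = ∑ C ∈ crossingMatchings G X Y,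
      #(perfectMatchings G (X \ coveredVerts C)) *
        #(perfectMatchings G (Y \ coveredVerts C)) := by
  simp only [← card_product, ← card_sigma]
  symm
  refine card_bij' (fun x _ => x.1 ∪ (x.2.1 ∪ x.2.2))
    (fun Z _ => ⟨Z \ (X.sym2 ∪ Y.sym2), Z ∩ X.sym2, Z ∩ Y.sym2⟩) ?_ ?_ ?_ ?_ <;>
  simp only [mem_sigma, mem_product]
  · rintro ⟨C, P, Q⟩ ⟨hC, hP, hQ⟩
    exact union_mem_perfectMatchings hXY hC hP hQ
  · intro Z hZ
    refine ⟨sdiff_mem_crossingMatchings hZ, inter_sym2_mem_perfectMatchings hXY hZ, ?_⟩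
    rw [union_comm] at hZ ⊢
    exact inter_sym2_mem_perfectMatchings hXY.symm hZ
  · rintro ⟨C, P, Q⟩ ⟨hC, hP, hQ⟩
    have hCsub := (mem_crossingMatchings.1 hC).1
    have hPX := (subset_sym2_of_mem_perfectMatchings hP).trans (sym2_mono sdiff_subset)
    have hQY := (subset_sym2_of_mem_perfectMatchings hQ).trans (sym2_mono sdiff_subset)
    have hdisj (e : Sym2 V) (heX : e ∈ X.sym2) (heY : e ∈ Y.sym2) : False :=
      Finset.disjoint_left.1 hXY (mem_sym2_iff.1 heX _ e.out_fst_mem)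
        (mem_sym2_iff.1 heY _ e.out_fst_mem)
    have hC' : (C ∪ (P ∪ Q)) \ (X.sym2 ∪ Y.sym2) = C := by grind
    have hP' : (C ∪ (P ∪ Q)) ∩ X.sym2 = P := by grind
    have hQ' : (C ∪ (P ∪ Q)) ∩ Y.sym2 = Q := by grind
    rw [hC', hP', hQ']
  · intro Z _
    rw [← inter_union_distrib_left, sdiff_union_inter]

end PerfectMatching

section Prism

variable {V : Type*} [DecidableEq V] {G : SimpleGraph V} {n : ℕ} {S U : Finset V}

/-- The edges joining the layers `n` and `n + 1` of `V × ℕ` over the vertices in `U`. -/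
def rungs (n : ℕ) (U : Finset V) : Finset (Sym2 (V × ℕ)) :=
  U.image fun v => s((v, n), (v, n + 1))

theorem mem_rungs {e : Sym2 (V × ℕ)} : e ∈ rungs n U ↔ ∃ v ∈ U, s((v, n), (v, n + 1)) = e :=
  mem_image

theorem rungs_injective : Function.Injective (rungs n : Finset V → _) := by
  refine image_injective fun v w hvw => ?_
  simpa using hvw

theorem coveredVerts_rungs : coveredVerts (rungs n U) = U ×ˢ {n, n + 1} := by
  ext ⟨v, k⟩
  simp only [mem_coveredVerts, mem_rungs, mem_product, mem_insert, mem_singleton]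
  constructor
  · rintro ⟨_, ⟨w, hw, rfl⟩, hv⟩
    grind
  · rintro ⟨hv, hk⟩
    exact ⟨_, ⟨v, hv, rfl⟩, by grind⟩

theorem isEdgeMatching_rungs : IsEdgeMatching (G □ SimpleGraph.hasse ℕ) (rungs n U) := by
  constructor <;> simp only [mem_rungs]
  · rintro _ ⟨v, -, rfl⟩
    simp [SimpleGraph.boxProd_adj]
  · rintro _ ⟨v, -, rfl⟩ _ ⟨w, -, rfl⟩ x hv hw
    grind

theorem crossingMatchings_prism [Fintype V] :
    crossingMatchings (G □ SimpleGraph.hasse ℕ) (univ ×ˢ range (n + 1)) (S ×ˢ {n + 1}) =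
      S.powerset.image (rungs n) := by
  ext C
  simp only [mem_crossingMatchings, mem_image, mem_powerset]
  constructor
  · rintro ⟨hC, hmatch⟩
    refine subset_image_iff.1 fun e he => ?_
    have hedge := hmatch.mem_edgeSet e he
    have hcross := hC he
    induction e with
    | h x y =>
      simp only [SimpleGraph.mem_edgeSet, SimpleGraph.boxProd_adj, SimpleGraph.hasse_adj,
        Nat.covBy_iff_add_one_eq] at hedge
      simp only [mem_sdiff, mem_union, mk_mem_sym2_iff, mem_product, mem_univ, mem_range,
        mem_singleton] at hcross
      simp only [mem_image]
      grind
  · rintro ⟨U, hU, rfl⟩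
    refine ⟨fun e he => ?_, isEdgeMatching_rungs⟩
    obtain ⟨v, hv, rfl⟩ := mem_rungs.1 he
    simp [hU hv]

theorem card_perfectMatchings_layer {H : SimpleGraph ℕ} :
    #(perfectMatchings (G □ H) (S ×ˢ {n})) = #(perfectMatchings G S) := by
  rw [← card_perfectMatchings_map (G.boxProdLeft H n)]
  congr 2
  ext ⟨v, k⟩
  simp

variable [Fintype V]

/-- The layers below `n` of `V × ℕ`, together with the part of layer `n` lying outside `S`. -/
def notchedPrism (n : ℕ) (S : Finset V) : Finset (V × ℕ) :=
  univ ×ˢ range n ∪ Sᶜ ×ˢ {n}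

theorem card_perfectMatchings_notchedPrism_succ :
    #(perfectMatchings (G □ SimpleGraph.hasse ℕ) (notchedPrism (n + 1) S)) =
      ∑ U ∈ Sᶜ.powerset, #(perfectMatchings (G □ SimpleGraph.hasse ℕ) (notchedPrism n U)) *
        #(perfectMatchings G (Sᶜ \ U)) := by
  have hdisj : Disjoint ((univ : Finset V) ×ˢ range (n + 1)) (Sᶜ ×ˢ {n + 1}) := by
    rw [disjoint_product]
    exact .inr (by simp)
  have lower (U : Finset V) :
      univ ×ˢ range (n + 1) \ U ×ˢ {n, n + 1} = notchedPrism n U := by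
    ext ⟨v, k⟩
    simp only [notchedPrism, mem_sdiff, mem_union, mem_product, mem_univ, mem_range, mem_insert,
      mem_singleton, mem_compl]
    grind
  have upper (U : Finset V) : Sᶜ ×ˢ {n + 1} \ U ×ˢ {n, n + 1} = (Sᶜ \ U) ×ˢ {n + 1} := by
    ext ⟨v, k⟩
    simp only [mem_sdiff, mem_product, mem_insert, mem_singleton]
    grind
  rw [notchedPrism, card_perfectMatchings_union hdisj, crossingMatchings_prism,
    sum_image rungs_injective.injOn]
  simp only [coveredVerts_rungs, lower, upper, card_perfectMatchings_layer]

end Prism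

section TransferMatrix

variable {V : Type*} [Fintype V] [DecidableEq V] {G : SimpleGraph V} {n : ℕ} {S U : Finset V}

/-- The layer-to-layer transfer matrix of `G □ pathGraph n`: the entry at `(S, U)` counts the ways
to match within one copy of `G` the vertices that are matched neither to the previous copy, which
are those in `S`, nor to the next one, which are those in `U`. -/
noncomputable def transferMatrix (G : SimpleGraph V) : Matrix (Finset V) (Finset V) ℤ :=
  Matrix.of fun S U => if Disjoint S U then (#(perfectMatchings G (S ∪ U)ᶜ) : ℤ) else 0

theorem transferMatrix_apply (G : SimpleGraph V) (S U : Finset V) : transferMatrix G S U =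
    if Disjoint S U then (#(perfectMatchings G (S ∪ U)ᶜ) : ℤ) else 0 := rfl

theorem transferMatrix_univ_left : transferMatrix G univ U = if U = ∅ then 1 else 0 := by
  simp [transferMatrix_apply, perfectMatchings_empty, ← top_eq_univ]

theorem transferMatrix_univ_right : transferMatrix G S univ = if S = ∅ then 1 else 0 := by
  simp [transferMatrix_apply, perfectMatchings_empty, ← top_eq_univ]

theorem card_perfectMatchings_notchedPrism :
    (#(perfectMatchings (G □ SimpleGraph.hasse ℕ) (notchedPrism n S)) : ℤ) =
      (transferMatrix G ^ (n + 1)) ∅ S := by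
  induction n generalizing S with
  | zero =>
    rw [notchedPrism, range_zero, product_empty, empty_union, card_perfectMatchings_layer]
    simp [transferMatrix_apply]
  | succ n ih =>
    rw [card_perfectMatchings_notchedPrism_succ, pow_succ, Matrix.mul_apply]
    push_cast
    refine sum_subset_zero_on_sdiff (subset_univ _) (fun U hU => ?_) fun U hU => ?_
    · have hUS : ¬Disjoint U S := by simpa [subset_compl_iff_disjoint_right] using hU
      rw [transferMatrix_apply, if_neg hUS, mul_zero]
    · have hUS : Disjoint U S := by simpa [subset_compl_iff_disjoint_right] using hU
      rw [ih, transferMatrix_apply, if_pos hUS, compl_union, inter_comm, ← sdiff_eq_inter_compl]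

theorem card_perfectMatchings_prism :
    (#(perfectMatchings (G □ SimpleGraph.hasse ℕ) (univ ×ˢ range n)) : ℤ) =
      (transferMatrix G ^ n) ∅ ∅ := by
  have hprism := card_perfectMatchings_notchedPrism (G := G) (n := n) (S := univ)
  simpa [notchedPrism, pow_succ, Matrix.mul_apply, transferMatrix_univ_right] using hprism

end TransferMatrix

section IsPM

variable {V : Type*} [Fintype V] [DecidableEq V] {G : SimpleGraph V}

theorem isPM_iff_mem_perfectMatchings {P : Finset (Sym2 V)} :
    IsPM G P ↔ P ∈ perfectMatchings G univ := by
  simp only [mem_perfectMatchings, eq_univ_iff_forall, mem_coveredVerts]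
  constructor
  · rintro ⟨hedge, huniq⟩
    exact ⟨⟨hedge, fun e he f hf v hve hvf => (huniq v).unique ⟨he, hve⟩ ⟨hf, hvf⟩⟩,
      fun v => (huniq v).exists⟩
  · rintro ⟨⟨hedge, huniq⟩, hcov⟩
    refine ⟨hedge, fun v => ?_⟩
    obtain ⟨e, he, hve⟩ := hcov v
    exact ⟨e, ⟨he, hve⟩, fun f hf => huniq f hf.1 e he v hf.2 hve⟩

/-- The box product with the path on `n` vertices, embedded in the box product with the path
on `ℕ`. -/
def boxProdPathEmbedding (G : SimpleGraph V) (n : ℕ) :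
    (G □ SimpleGraph.pathGraph n) ↪g (G □ SimpleGraph.hasse ℕ) where
  toEmbedding := (Function.Embedding.refl V).prodMap Fin.valEmbedding
  map_rel_iff' := by
    simp [SimpleGraph.boxProd_adj, SimpleGraph.pathGraph_adj, SimpleGraph.hasse_adj,
      Fin.val_inj]

theorem ncard_isPM_boxProd_pathGraph (n : ℕ) :
    ({P | IsPM (G □ SimpleGraph.pathGraph n) P}.ncard : ℤ) = (transferMatrix G ^ n) ∅ ∅ := by
  have hmap : univ.map (boxProdPathEmbedding G n).toEmbedding = univ ×ˢ range n := by
    ext ⟨v, k⟩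
    simp [boxProdPathEmbedding, Fin.exists_iff]
  rw [← card_perfectMatchings_prism, ← hmap, card_perfectMatchings_map, ← Set.ncard_coe_finset]
  simp only [isPM_iff_mem_perfectMatchings]
  rfl

end IsPM

section Inverse

variable {V : Type*} [Fintype V] [DecidableEq V] {G : SimpleGraph V} {S U : Finset V}

/-- The inverse of the transfer matrix: up to signs, the transfer matrix itself with complemented
indices. -/
noncomputable def transferInv (G : SimpleGraph V) : Matrix (Finset V) (Finset V) ℤ :=
  Matrix.of fun S U => (-1) ^ (#(S ∩ U) / 2) * transferMatrix G Sᶜ Uᶜ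

theorem transferInv_apply (G : SimpleGraph V) (S U : Finset V) :
    transferInv G S U = (-1) ^ (#(S ∩ U) / 2) * transferMatrix G Sᶜ Uᶜ := rfl

theorem disjoint_of_transferMatrix_ne_zero (h : transferMatrix G S U ≠ 0) : Disjoint S U := by
  by_contra hSU
  exact h (if_neg hSU)

theorem subset_of_transferMatrix_mul_transferInv_ne_zero {A : Finset V}
    (h : transferMatrix G S A * transferInv G A U ≠ 0) : Uᶜ ⊆ A ∧ A ⊆ Sᶜ := by
  rw [transferInv_apply] at h
  have hSA := disjoint_of_transferMatrix_ne_zero (left_ne_zero_of_mul h)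
  have hAU := disjoint_of_transferMatrix_ne_zero (right_ne_zero_of_mul (right_ne_zero_of_mul h))
  exact ⟨by simpa using subset_compl_iff_disjoint_left.2 hAU,
    subset_compl_iff_disjoint_left.2 hSA⟩

theorem transferMatrix_mul_transferInv_apply_of_subset (hSU : S ⊆ U) :
    (transferMatrix G * transferInv G) S U = ∑ B ∈ (U \ S).powerset,
      (-1 : ℤ) ^ (#B / 2) * #(perfectMatchings G B) * #(perfectMatchings G ((U \ S) \ B)) := by
  have inter_eq {B} (hB : B ∈ (U \ S).powerset) : (Uᶜ ∪ B) ∩ U = B := by grind [mem_compl]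
  rw [Matrix.mul_apply]
  refine (sum_of_injOn (Uᶜ ∪ ·) ?_ (fun B _ => mem_univ _) (fun A _ hA => ?_) fun B hB => ?_).symm
  · exact Set.LeftInvOn.injOn (f₁' := (· ∩ U)) fun B hB => inter_eq hB
  · by_contra hne
    obtain ⟨hUA, hAS⟩ := subset_of_transferMatrix_mul_transferInv_ne_zero hne
    refine hA ⟨A ∩ U, ?_, ?_⟩
    · rw [mem_coe, mem_powerset]
      grind [mem_compl]
    · grind [mem_compl]
  · have hSA : Disjoint S (Uᶜ ∪ B) := by grind [mem_compl, Finset.disjoint_left]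
    have hAU : Disjoint (Uᶜ ∪ B)ᶜ Uᶜ := disjoint_compl_left.mono_right subset_union_left
    have hSA' : (S ∪ (Uᶜ ∪ B))ᶜ = (U \ S) \ B := by grind [mem_compl]
    have hAU' : ((Uᶜ ∪ B)ᶜ ∪ Uᶜ)ᶜ = B := by grind [mem_compl]
    rw [transferInv_apply, transferMatrix_apply, transferMatrix_apply, if_pos hSA, if_pos hAU,
      hSA', hAU', inter_eq hB]
    ring

theorem transferMatrix_mul_transferInv : transferMatrix G * transferInv G = 1 := by
  ext S U
  by_cases hSU : S ⊆ U
  · rw [transferMatrix_mul_transferInv_apply_of_subset hSU,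
      sum_powerset_neg_one_pow_mul_card_perfectMatchings, Matrix.one_apply]
    exact if_congr (by rw [sdiff_eq_empty_iff_subset, hSU.ge_iff_eq]) rfl rfl
  · rw [Matrix.mul_apply, Matrix.one_apply_ne fun h => hSU h.subset]
    refine sum_eq_zero fun A _ => ?_
    by_contra hne
    obtain ⟨hUA, hAS⟩ := subset_of_transferMatrix_mul_transferInv_ne_zero hne
    exact hSU (compl_subset_compl.1 (hUA.trans hAS))

theorem inv_transferMatrix : (transferMatrix G)⁻¹ = transferInv G :=
  Matrix.inv_eq_right_inv transferMatrix_mul_transferInv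

theorem isUnit_det_transferMatrix : IsUnit (transferMatrix G).det :=
  Matrix.isUnit_det_of_right_inverse transferMatrix_mul_transferInv

end Inverse

section LinearRecurrence

theorem sum_charpoly_coeff_mul_zpow_apply {ι R : Type*} [Fintype ι] [DecidableEq ι] [CommRing R]
    {M : Matrix ι ι R} (hM : IsUnit M.det) (n : ℤ) (i k : ι) :
    ∑ j ∈ range (M.charpoly.natDegree + 1), M.charpoly.coeff j * (M ^ (n + j)) i k = 0 := by
  have cayley_hamilton := congrArg (M ^ n * ·) M.aeval_self_charpoly
  simp only [Polynomial.aeval_eq_sum_range, Finset.mul_sum, Matrix.mul_smul, mul_zero,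
    ← zpow_natCast, ← Matrix.zpow_add hM] at cayley_hamilton
  simpa [Matrix.sum_apply] using congrFun₂ cayley_hamilton i k

end LinearRecurrence

section Sign

variable {V : Type*} [Fintype V] [DecidableEq V] {G : SimpleGraph V} {S U : Finset V} {n : ℕ}

theorem even_card_of_transferMatrix_ne_zero (h : transferMatrix G S U ≠ 0) :
    Even (#S + #U + Fintype.card V) := by
  have hSU := disjoint_of_transferMatrix_ne_zero h
  rw [transferMatrix_apply, if_pos hSU, Nat.cast_ne_zero, card_ne_zero] at h
  obtain ⟨P, hP⟩ := h
  have hcard := card_eq_two_mul_of_mem_perfectMatchings hP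
  have := card_add_card_compl (S ∪ U)
  rw [card_union_of_disjoint hSU] at this
  exact ⟨#S + #U + #P, by lia⟩

theorem even_card_of_transferMatrix_pow_ne_zero (h : (transferMatrix G ^ n) S U ≠ 0) :
    Even (#S + #U + n * Fintype.card V) := by
  induction n generalizing U with
  | zero =>
    have hSU : S = U := by
      by_contra hSU
      simp [hSU] at h
    simp [hSU]
  | succ n ih =>
    rw [pow_succ, Matrix.mul_apply] at h
    obtain ⟨A, -, hA⟩ := exists_ne_zero_of_sum_ne_zero h
    have hSA := ih (left_ne_zero_of_mul hA)
    have hAU := even_card_of_transferMatrix_ne_zero (right_ne_zero_of_mul hA)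
    grind

theorem transferMatrix_pow_add_two_univ_univ :
    (transferMatrix G ^ (n + 2)) univ univ = (transferMatrix G ^ n) ∅ ∅ := by
  rw [pow_succ, pow_succ']
  simp [Matrix.mul_apply, transferMatrix_univ_left, transferMatrix_univ_right]

/-- The sign by which the entries of the `n`-th powers of the transfer matrix of a graph with `m`
vertices and of its inverse differ at `(univ, Uᶜ)` and `(∅, U)`, where `#U = u`. The division is
exact whenever these entries are nonzero. -/
def complementSign (m n u : ℕ) : ℤ :=
  Int.negOnePow (m * n.choose 2 + (u - n * m) / 2)

theorem complementSign_mul_neg_one_pow {m a u c : ℕ} (ha : Even (a + n * m)) (hc : Even c)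
    (hcm : c + m = a + u) : complementSign m n a * (-1) ^ (c / 2) = complementSign m (n + 1) u := by
  obtain ⟨x, rfl⟩ := hc
  obtain ⟨y, hy⟩ := ha
  have hchoose : m * (n + 1).choose 2 = n * m + m * n.choose 2 := by
    rw [Nat.choose_succ_succ' n 1, Nat.choose_one_right]
    ring
  have hx : (x + x) / 2 = x := by lia
  have ha : ((a : ℤ) - n * m) / 2 = y - n * m := by lia
  have hu : ((u : ℤ) - (n + 1 : ℕ) * m) / 2 = x - y := by grind
  rw [complementSign, complementSign, hx, ha, hu, ← Int.coe_negOnePow_natCast, ← Units.val_mul,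
    ← Int.negOnePow_add, Units.val_inj, Int.negOnePow_eq_iff]
  exact ⟨y - n * m, by grind⟩

theorem transferInv_pow_apply : (transferInv G ^ n) ∅ U =
    complementSign (Fintype.card V) n #U * (transferMatrix G ^ n) univ Uᶜ := by
  induction n generalizing U with
  | zero =>
    by_cases hU : U = ∅
    · simp [hU, complementSign]
    · simp [Matrix.one_apply_ne (Ne.symm hU), Matrix.one_apply_ne, hU, eq_comm]
  | succ n ih =>
    rw [pow_succ, pow_succ, Matrix.mul_apply, Matrix.mul_apply, mul_sum]
    refine Fintype.sum_bijective compl compl_bijective _ _ fun A => ?_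
    rw [ih, transferInv_apply, mul_mul_mul_comm]
    by_cases hzero : (transferMatrix G ^ n) univ Aᶜ * transferMatrix G Aᶜ Uᶜ = 0
    · rw [hzero, mul_zero, mul_zero]
    congr 1
    have hunivA := even_card_of_transferMatrix_pow_ne_zero (left_ne_zero_of_mul hzero)
    have hAU := even_card_of_transferMatrix_ne_zero (right_ne_zero_of_mul hzero)
    have hcover : A ∪ U = univ := by
      rw [← compl_eq_empty_iff, compl_union, ← disjoint_iff_inter_eq_empty]
      exact disjoint_of_transferMatrix_ne_zero (right_ne_zero_of_mul hzero)
    have hcard := card_inter_add_card_union A U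
    rw [hcover, card_univ] at hcard
    rw [card_univ] at hunivA
    have := card_add_card_compl A
    have := card_add_card_compl U
    exact complementSign_mul_neg_one_pow (by grind) (by grind) hcard

end Sign

section Reciprocity

theorem eps_neg_two_sub (m : ℕ) (n : ℤ) : eps m (-2 - n) = eps m n := by
  have hodd : Odd (-2 - n) ↔ Odd n := by grind
  simp only [eps, hodd]

theorem eps_mul_self (m : ℕ) (n : ℤ) : eps m n * eps m n = 1 := by
  grind [eps]

theorem eps_eq_negOnePow {m n k : ℕ} (hk : n * m = 2 * k) :
    eps m n = ((k * n : ℕ) : ℤ).negOnePow := by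
  have hodd : Odd (k * n) ↔ m % 4 = 2 ∧ Odd n := by
    rw [Nat.odd_mul, and_congr_left_iff]
    intro hn
    obtain ⟨r, rfl⟩ : 2 ∣ m := hn.coprime_two_left.dvd_of_dvd_mul_left ⟨k, hk⟩
    obtain rfl : k = n * r := by lia
    rw [Nat.odd_mul, and_iff_right hn]
    grind
  simp only [eps, Int.odd_coe_nat, ← hodd]
  split_ifs with h
  · rw [Int.negOnePow_odd _ (mod_cast h), Units.val_neg, Units.val_one]
  · rw [Int.negOnePow_even _ (mod_cast Nat.not_odd_iff_even.1 h), Units.val_one]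

theorem complementSign_add_two {m n : ℕ} (hnm : Even (n * m)) :
    complementSign m (n + 2) 0 = eps m n := by
  obtain ⟨k, hk⟩ := even_iff_exists_two_mul.1 hnm
  have hchoose : m * (n + 2).choose 2 = (k + m) * (n + 1) := by
    have hpascal := Nat.add_one_mul_choose_eq (n + 1) 1
    rw [Nat.choose_one_right] at hpascal
    grind
  have hhalf : ((0 : ℕ) - (n + 2 : ℕ) * m : ℤ) / 2 = -(k + m) := by grind
  rw [eps_eq_negOnePow hk, complementSign, hhalf, Units.val_inj, Int.negOnePow_eq_iff]
  exact ⟨k, by grind⟩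

variable {V : Type*} [Fintype V] [DecidableEq V]

/-- The number of perfect matchings of `G □ pathGraph n`, extrapolated to negative `n`. -/
noncomputable def extrapolatedCount (G : SimpleGraph V) (n : ℤ) : ℤ :=
  (transferMatrix G ^ n) ∅ ∅

variable {G : SimpleGraph V}

theorem extrapolatedCount_natCast (n : ℕ) :
    extrapolatedCount G n = {P | IsPM (G □ SimpleGraph.pathGraph n) P}.ncard := by
  rw [ncard_isPM_boxProd_pathGraph, extrapolatedCount, zpow_natCast]

theorem extrapolatedCount_neg_natCast (n : ℕ) : extrapolatedCount G (-n) =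
    complementSign (Fintype.card V) n 0 * (transferMatrix G ^ n) univ univ := by
  rw [extrapolatedCount, Matrix.zpow_neg_natCast, ← Matrix.inv_pow', inv_transferMatrix,
    transferInv_pow_apply, card_empty, compl_empty]

theorem extrapolatedCount_neg_two_sub_natCast (n : ℕ) :
    extrapolatedCount G (-2 - n) = eps (Fintype.card V) n * extrapolatedCount G n := by
  have hindex : (-2 - n : ℤ) = -((n + 2 : ℕ) : ℤ) := by lia
  rw [hindex, extrapolatedCount_neg_natCast, transferMatrix_pow_add_two_univ_univ,
    extrapolatedCount, zpow_natCast]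
  by_cases hzero : (transferMatrix G ^ n) ∅ ∅ = 0
  · rw [hzero, mul_zero, mul_zero]
  · have heven := even_card_of_transferMatrix_pow_ne_zero hzero
    rw [complementSign_add_two (by simpa using heven)]

theorem extrapolatedCount_neg_one [Nonempty V] : extrapolatedCount G (-1) = 0 := by
  have := extrapolatedCount_neg_natCast (G := G) 1
  simpa [transferMatrix_univ_left, univ_nonempty.ne_empty] using this

theorem extrapolatedCount_neg_two_sub (n : ℤ) :
    extrapolatedCount G (-2 - n) = eps (Fintype.card V) n * extrapolatedCount G n := by
  rcases lt_trichotomy n (-1) with hn | rfl | hn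
  · obtain ⟨k, hk⟩ := Int.eq_ofNat_of_zero_le (show 0 ≤ -2 - n by lia)
    have hreflect := extrapolatedCount_neg_two_sub_natCast (G := G) k
    rw [← hk, eps_neg_two_sub, sub_sub_cancel] at hreflect
    rw [hreflect, ← mul_assoc, eps_mul_self, one_mul]
  · by_cases hcard : Fintype.card V % 4 = 2
    · have : Nonempty V := Fintype.card_pos_iff.1 (by lia)
      norm_num [extrapolatedCount_neg_one]
    · norm_num [eps, hcard]
  · lift n to ℕ using by lia
    exact extrapolatedCount_neg_two_sub_natCast n

end Reciprocity

theorem grid_eq_boxProd (m n : ℕ) :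
    grid m n = SimpleGraph.pathGraph m □ SimpleGraph.pathGraph n := by
  ext p q
  simp only [grid, SimpleGraph.fromRel_adj, SimpleGraph.boxProd_adj, SimpleGraph.pathGraph_adj]
  grind

theorem reciprocity_for_domino_tilings_general {V : Type*} [Fintype V] (G : SimpleGraph V) :
    ∃ (d : ℕ), 1 ≤ d ∧ ∃ (a : ℕ → ℤ), (∃ j ≤ d, a j ≠ 0) ∧ ∃ t : ℤ → ℤ,
      (∀ n : ℤ, ∑ j ∈ Finset.range (d + 1), a j * t (n + j) = 0) ∧
      (∀ n : ℕ, t n = {P | IsPM (G □ SimpleGraph.pathGraph n) P}.ncard) ∧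
      (∀ n : ℤ, t (-2 - n) = eps (Fintype.card V) n * t n) := by
  classical
  let p := (transferMatrix G).charpoly
  have hdegree : 1 ≤ p.natDegree := by
    rw [Matrix.charpoly_natDegree_eq_dim]
    exact Fintype.card_pos
  have hleading : p.coeff p.natDegree ≠ 0 := by
    rw [(Matrix.charpoly_monic _).coeff_natDegree]
    exact one_ne_zero
  exact ⟨p.natDegree, hdegree, p.coeff, ⟨_, le_rfl, hleading⟩, extrapolatedCount G,
    fun n => sum_charpoly_coeff_mul_zpow_apply isUnit_det_transferMatrix n ∅ ∅,
    extrapolatedCount_natCast, extrapolatedCount_neg_two_sub⟩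

/-- The counts T(m,n), extrapolated to negative n by a linear recurrence,
satisfy the reciprocity relation T(m,−2−n) = ε_{m,n} T(m,n). -/
theorem reciprocity_for_domino_tilings (m : ℕ) (hm : 1 ≤ m) :
    ∃ (d : ℕ), 1 ≤ d ∧ ∃ (a : ℕ → ℤ), (∃ j ≤ d, a j ≠ 0) ∧ ∃ t : ℤ → ℤ,
      (∀ n : ℤ, ∑ j ∈ Finset.range (d + 1), a j * t (n + j) = 0) ∧
      (∀ n : ℤ, 1 ≤ n → t n = T m n.toNat) ∧
      (∀ n : ℤ, t (-2 - n) = eps m n * t n) := by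
  obtain ⟨d, hd, a, ha, t, hrec, hcount, hrecip⟩ :=
    reciprocity_for_domino_tilings_general (SimpleGraph.pathGraph m)
  refine ⟨d, hd, a, ha, t, hrec, fun n hn => ?_, by simpa using hrecip⟩
  rw [T, grid_eq_boxProd, ← hcount, Int.toNat_of_nonneg (by lia)]
end

section
/- Suppose t₁, t₂ : ℤ → ℤ each satisfy some nontrivial constant-coefficient linear recurrence valid at every n ∈ ℤ; that is, there exist integers a_0, …, a_d, not all zero, with ∑_{j=0}^{d} a_j t₁(n+j) = 0 for all n ∈ ℤ, and integers b_0, …, b_e, not all zero, with ∑_{j=0}^{e} b_j t₂(n+j) = 0 for all n ∈ ℤ. If t₁(n) = t₂(n) for all n ≥ 1, then t₁ = t₂. (The extrapolation of a sequence to negative indices via a linear recurrence does not depend on which recurrence is used.) -/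
open Finset

/-!
Let polynomials act on two-sided sequences with `X` acting as the left shift. A nonzero polynomial
is injective on sequences that vanish far to the right: its trailing coefficient recovers each entry
from the later ones. If `p` annihilates `t₁` and `q` annihilates `t₂`, then `p * q` annihilates
`t₁ - t₂`, which vanishes far to the right, and `p * q ≠ 0`.
-/

open Polynomial

section Shift

variable (R M : Type*) [CommSemiring R] [AddCommMonoid M] [Module R M]

/-- The left shift `(S u) n = u (n + 1)` on two-sided sequences, as an `R`-linear endomorphism, so
that the recurrence operator with characteristic polynomial `p` is `aeval (leftShift R M) p`. -/
def leftShift : Module.End R (ℤ → M) :=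
  LinearMap.funLeft R M (· + 1)

variable {R M}

theorem leftShift_pow_apply (k : ℕ) (u : ℤ → M) (n : ℤ) :
    (leftShift R M ^ k) u n = u (n + k) := by
  induction k generalizing u with
  | zero => simp
  | succ k ih =>
    rw [pow_succ, Module.End.mul_apply, ih, leftShift, LinearMap.funLeft_apply, Nat.cast_succ,
      add_assoc]

theorem aeval_leftShift_apply (p : R[X]) (u : ℤ → M) (n : ℤ) :
    aeval (leftShift R M) p u n = ∑ j ∈ range (p.natDegree + 1), p.coeff j • u (n + j) := by
  simp [aeval_eq_sum_range, LinearMap.sum_apply, leftShift_pow_apply]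

theorem aeval_leftShift_apply_sub_natTrailingDegree {p : R[X]} {u : ℤ → M} {n : ℤ}
    (hu : ∀ m, n < m → u m = 0) :
    aeval (leftShift R M) p u (n - p.natTrailingDegree) = p.trailingCoeff • u n := by
  rw [aeval_leftShift_apply, sum_eq_single p.natTrailingDegree, sub_add_cancel, trailingCoeff]
  · intro j _ hj
    rcases hj.lt_or_gt with hlt | hgt
    · rw [coeff_eq_zero_of_lt_natTrailingDegree hlt, zero_smul]
    · rw [hu _ (by lia), smul_zero]
  · exact fun hmem => absurd (mem_range_succ_iff.2 p.natTrailingDegree_le_natDegree) hmem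

theorem eq_zero_of_aeval_leftShift_eq_zero [IsCancelMulZero R] [Module.IsTorsionFree R M]
    {p : R[X]} (hp : p ≠ 0) {u : ℤ → M} (hpu : aeval (leftShift R M) p u = 0) {N : ℤ}
    (hu : ∀ n, N ≤ n → u n = 0) : u = 0 := by
  have eq_zero_of_later {n : ℤ} (hlater : ∀ m, n < m → u m = 0) : u n = 0 := by
    have htrailing := aeval_leftShift_apply_sub_natTrailingDegree (p := p) hlater
    rw [hpu, Pi.zero_apply, eq_comm] at htrailing
    exact (smul_eq_zero_iff_right (trailingCoeff_eq_zero.not.2 hp)).1 htrailing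
  have vanish_from (n : ℤ) (hn : n ≤ N) : ∀ m, n ≤ m → u m = 0 := by
    induction n, hn using Int.leInductionDown with
    | base => exact hu
    | pred n _ ih =>
      intro m hm
      exact eq_zero_of_later fun l hl => ih l (by lia)
  funext n
  exact vanish_from (min n N) (min_le_right n N) n (min_le_left n N)

end Shift

section RecurrencePolynomial

variable {R M : Type*} [CommSemiring R] [AddCommMonoid M] [Module R M]

/-- The characteristic polynomial `∑_{j ≤ d} a_j X ^ j` of a recurrence of order at most `d`.
Coefficients of index greater than `d` are ignored. -/
noncomputable def recurrencePolynomial (d : ℕ) (a : ℕ → R) : R[X] :=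
  ∑ j ∈ range (d + 1), monomial j (a j)

theorem recurrencePolynomial_ne_zero {d : ℕ} {a : ℕ → R} (ha : ∃ j ≤ d, a j ≠ 0) :
    recurrencePolynomial d a ≠ 0 := by
  obtain ⟨j, hjd, haj⟩ := ha
  have hcoeff : (recurrencePolynomial d a).coeff j = a j := by
    simp [recurrencePolynomial, coeff_monomial, hjd]
  exact fun hzero => haj (by rw [← hcoeff, hzero, coeff_zero])

theorem aeval_leftShift_recurrencePolynomial_apply (d : ℕ) (a : ℕ → R) (u : ℤ → M) (n : ℤ) :
    aeval (leftShift R M) (recurrencePolynomial d a) u n =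
      ∑ j ∈ range (d + 1), a j • u (n + j) := by
  simp [recurrencePolynomial, aeval_monomial, LinearMap.sum_apply, leftShift_pow_apply]

end RecurrencePolynomial

section Extrapolation

variable {R M : Type*} [CommSemiring R] [IsCancelMulZero R] [AddCommGroup M] [Module R M]
  [Module.IsTorsionFree R M]

theorem eq_of_aeval_leftShift_eq_zero {p q : R[X]} (hp : p ≠ 0) (hq : q ≠ 0) {t₁ t₂ : ℤ → M}
    (h₁ : aeval (leftShift R M) p t₁ = 0) (h₂ : aeval (leftShift R M) q t₂ = 0) {N : ℤ}
    (heq : ∀ n, N ≤ n → t₁ n = t₂ n) : t₁ = t₂ := by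
  have hpq₁ : aeval (leftShift R M) (p * q) t₁ = 0 := by
    rw [mul_comm, map_mul, Module.End.mul_apply, h₁, map_zero]
  have hpq₂ : aeval (leftShift R M) (p * q) t₂ = 0 := by
    rw [map_mul, Module.End.mul_apply, h₂, map_zero]
  have hpq : aeval (leftShift R M) (p * q) (t₁ - t₂) = 0 := by
    rw [map_sub, hpq₁, hpq₂, sub_zero]
  exact sub_eq_zero.1 <| eq_zero_of_aeval_leftShift_eq_zero (mul_ne_zero hp hq) hpq
    fun n hn => sub_eq_zero.2 (heq n hn)

theorem extrapolation_unique_general {t₁ t₂ : ℤ → M} {d e : ℕ} {a b : ℕ → R}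
    (ha : ∃ j ≤ d, a j ≠ 0) (hb : ∃ j ≤ e, b j ≠ 0)
    (h₁ : ∀ n : ℤ, ∑ j ∈ range (d + 1), a j • t₁ (n + j) = 0)
    (h₂ : ∀ n : ℤ, ∑ j ∈ range (e + 1), b j • t₂ (n + j) = 0)
    {N : ℤ} (heq : ∀ n, N ≤ n → t₁ n = t₂ n) : t₁ = t₂ :=
  eq_of_aeval_leftShift_eq_zero
    (recurrencePolynomial_ne_zero ha) (recurrencePolynomial_ne_zero hb)
    (funext fun n => (aeval_leftShift_recurrencePolynomial_apply d a t₁ n).trans (h₁ n))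
    (funext fun n => (aeval_leftShift_recurrencePolynomial_apply e b t₂ n).trans (h₂ n)) heq

end Extrapolation

/-- The extrapolation of a sequence to negative indices via a constant-coefficient
linear recurrence does not depend on which recurrence is used. -/
theorem extrapolation_unique
    (t₁ t₂ : ℤ → ℤ) (d e : ℕ) (a b : ℕ → ℤ)
    (ha : ∃ j ≤ d, a j ≠ 0) (hb : ∃ j ≤ e, b j ≠ 0)
    (h₁ : ∀ n : ℤ, ∑ j ∈ Finset.range (d + 1), a j * t₁ (n + j) = 0)
    (h₂ : ∀ n : ℤ, ∑ j ∈ Finset.range (e + 1), b j * t₂ (n + j) = 0)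
    (heq : ∀ n : ℤ, 1 ≤ n → t₁ n = t₂ n) :
    t₁ = t₂ :=
  extrapolation_unique_general ha hb h₁ h₂ heq
end

section
/- Let m, n ≥ 1 and let P be a perfect matching of the grid graph G(m,n). Then for every i with 0 ≤ i ≤ m−2 (rows indexed 0, …, m−1), the number of vertical edges of P joining a vertex in row i to a vertex in row i+1 is congruent to n·(i+1) modulo 2. -/
open Finset

open scoped Classical in
/-- The number of vertical edges in `P` (edges whose endpoints differ in the
first, i.e. row, coordinate). -/
noncomputable def vert {m n : ℕ} (P : Finset (Sym2 (Fin m × Fin n))) : ℕ :=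
  (P.filter (fun e => ∃ p q : Fin m × Fin n, e = s(p, q) ∧ p.1 ≠ q.1)).card

/-!
Count the vertices in rows `0, …, i` through the edges of `P` covering them. An edge contributes
`0`, `1` or `2`, and it contributes `1` exactly when it leaves this set of rows; since adjacent
vertices lie at most one row apart, it then joins row `i` to row `i + 1`. Modulo `2` only these
edges remain, and the number of vertices counted is `n * (i + 1)`.
-/

section Crossing

variable {V : Type*}

/-- The edge `e` crosses the cut `(S, Sᶜ)`: it has one endpoint in `S` and the other outside.
The witnesses `p`, `q` orient the unordered pair `e` from `S` to its complement. -/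
def Crosses (S : Set V) (e : Sym2 V) : Prop :=
  ∃ p q, e = s(p, q) ∧ p ∈ S ∧ q ∉ S

theorem crosses_mk_iff {S : Set V} {p q : V} :
    Crosses S s(p, q) ↔ (p ∈ S ∧ q ∉ S) ∨ (q ∈ S ∧ p ∉ S) := by
  constructor
  · rintro ⟨a, b, hab, ha, hb⟩
    rcases Sym2.eq_iff.mp hab with ⟨rfl, rfl⟩ | ⟨rfl, rfl⟩
    · exact .inl ⟨ha, hb⟩
    · exact .inr ⟨ha, hb⟩
  · rintro (⟨hp, hq⟩ | ⟨hq, hp⟩)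
    · exact ⟨p, q, rfl, hp, hq⟩
    · exact ⟨q, p, Sym2.eq_swap, hq, hp⟩

theorem odd_card_filter_mem_iff_crosses [DecidableEq V] (S : Finset V) {e : Sym2 V}
    (he : ¬e.IsDiag) : Odd #{v ∈ S | v ∈ e} ↔ Crosses (S : Set V) e := by
  induction e with
  | _ p q =>
  have hpq : p ≠ q := he
  have hfilter : {v ∈ S | v ∈ s(p, q)} = {v ∈ ({p, q} : Finset V) | v ∈ S} := by
    ext v
    simp [and_comm]
  rw [hfilter, card_filter, sum_pair hpq, crosses_mk_iff]
  by_cases hp : p ∈ S <;> by_cases hq : q ∈ S <;> simp [hp, hq]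

theorem crosses_sublevel_iff {G : SimpleGraph V} {f : V → ℕ}
    (hf : ∀ p q, G.Adj p q → f q ≤ f p + 1) (i : ℕ) {e : Sym2 V} (he : e ∈ G.edgeSet) :
    Crosses {v | f v ≤ i} e ↔ ∃ p q, e = s(p, q) ∧ f p = i ∧ f q = i + 1 := by
  refine exists₂_congr fun p q => and_congr_right ?_
  rintro rfl
  have hstep := hf p q he
  simp only [Set.mem_ofPred_eq]
  omega

end Crossing

namespace IsPM

variable {V : Type*} {G : SimpleGraph V} {P : Finset (Sym2 V)}

theorem card_filter_mem_eq_one [DecidableEq V] (hP : IsPM G P) (v : V) :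
    #{e ∈ P | v ∈ e} = 1 := by
  rw [card_eq_one, singleton_iff_unique_mem]
  simpa only [mem_filter] using hP.2 v

theorem sum_card_filter_mem [DecidableEq V] (hP : IsPM G P) (S : Finset V) :
    ∑ e ∈ P, #{v ∈ S | v ∈ e} = #S :=
  calc ∑ e ∈ P, #{v ∈ S | v ∈ e}
    _ = ∑ v ∈ S, #{e ∈ P | v ∈ e} :=
      (sum_card_bipartiteAbove_eq_sum_card_bipartiteBelow (fun v e => v ∈ e)).symm
    _ = ∑ _v ∈ S, 1 := sum_congr rfl fun v _ => hP.card_filter_mem_eq_one v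
    _ = #S := (card_eq_sum_ones S).symm

theorem card_crosses_modEq_card (hP : IsPM G P) (S : Finset V)
    [DecidablePred (Crosses (S : Set V))] :
    #{e ∈ P | Crosses (S : Set V) e} ≡ #S [MOD 2] := by
  classical
  have hodd : Odd #{e ∈ P | Crosses (S : Set V) e} ↔ Odd #S := by
    rw [← hP.sum_card_filter_mem S, odd_sum_iff_odd_card_odd]
    refine iff_of_eq (congrArg (fun T => Odd #T) (filter_congr fun e he => ?_))
    exact (odd_card_filter_mem_iff_crosses S (G.not_isDiag_of_mem_edgeSet (hP.1 e he))).symm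
  rw [Nat.odd_iff, Nat.odd_iff] at hodd
  unfold Nat.ModEq
  omega

theorem card_level_crossing_modEq_card_sublevel [Fintype V] (hP : IsPM G P) {f : V → ℕ}
    (hf : ∀ p q, G.Adj p q → f q ≤ f p + 1) (i : ℕ)
    [DecidablePred fun e : Sym2 V => ∃ p q, e = s(p, q) ∧ f p = i ∧ f q = i + 1] :
    #{e ∈ P | ∃ p q, e = s(p, q) ∧ f p = i ∧ f q = i + 1} ≡ #{v | f v ≤ i} [MOD 2] := by
  classical
  rw [← filter_congr fun e he => crosses_sublevel_iff hf i (hP.1 e he)]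
  simpa only [coe_filter_univ] using hP.card_crosses_modEq_card {v | f v ≤ i}

end IsPM

section Grid

variable {m n : ℕ}

theorem row_le_row_add_one_of_grid_adj {p q : Fin m × Fin n} (h : (grid m n).Adj p q) :
    (q.1 : ℕ) ≤ p.1 + 1 := by
  simp only [grid, SimpleGraph.fromRel_adj, Fin.ext_iff] at h
  omega

theorem card_rows_le {i : ℕ} (hi : i < m) :
    #{v : Fin m × Fin n | (v.1 : ℕ) ≤ i} = n * (i + 1) := by
  have hrows : ({v | v.1 ≤ i} : Finset (Fin m × Fin n)) = Iic ⟨i, hi⟩ ×ˢ univ := by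
    ext v
    simp [Fin.le_def]
  rw [hrows, card_product, Fin.card_Iic, card_univ, Fintype.card_fin, mul_comm]

end Grid

open scoped Classical in
/-- In any perfect matching of the m-by-n grid graph, the number of vertical edges
joining row i to row i+1 is congruent to n·(i+1) mod 2. -/
theorem row_crossing_parity (m n : ℕ) (hm : 1 ≤ m) (hn : 1 ≤ n)
    (P : Finset (Sym2 (Fin m × Fin n))) (hP : IsPM (grid m n) P)
    (i : ℕ) (hi : i + 2 ≤ m) :
    (P.filter (fun e => ∃ p q : Fin m × Fin n,
        e = s(p, q) ∧ (p.1 : ℕ) = i ∧ (q.1 : ℕ) = i + 1)).card ≡ n * (i + 1) [MOD 2] := by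
  rw [← card_rows_le (by omega : i < m)]
  exact hP.card_level_crossing_modEq_card_sublevel (f := fun v => (v.1 : ℕ))
    (fun _ _ => row_le_row_add_one_of_grid_adj) i
end

section
/- Let m, n ≥ 1 and let P be a perfect matching of the grid graph G(m,n). Then the total number of vertical edges of P is congruent to n·m·(m−1)/2 modulo 2. -/
open Finset

/-!
Weight each vertex by its row index. Every vertex lies on exactly one edge of a perfect matching,
so the edge sums of the weights add up to the total weight `n * (0 + 1 + ⋯ + (m - 1))`. The two
rows met by an edge of the grid agree or are consecutive, so its edge sum is odd exactly when the
edge is vertical; hence the number of vertical edges has the parity of the total weight.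
-/

theorem sum_sum_eq_sum_of_existsUnique_mem {ι V M : Type*} [Fintype V] [AddCommMonoid M]
    {P : Finset ι} {t : ι → Finset V} (hP : ∀ v, ∃! i, i ∈ P ∧ v ∈ t i) (f : V → M) :
    ∑ i ∈ P, ∑ v ∈ t i, f v = ∑ v, f v := by
  classical
  have disjoint_blocks : (P : Set ι).PairwiseDisjoint t := fun i hi j hj hij =>
    Finset.disjoint_left.2 fun v hvi hvj => hij ((hP v).unique ⟨hi, hvi⟩ ⟨hj, hvj⟩)
  have blocks_cover : P.biUnion t = univ :=
    eq_univ_iff_forall.2 fun v => mem_biUnion.2 (hP v).exists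
  rw [← sum_biUnion disjoint_blocks, blocks_cover]

theorem IsPM.odd_card_filter_odd_sum_iff {V : Type*} [Fintype V] [DecidableEq V]
    {G : SimpleGraph V} {P : Finset (Sym2 V)} (hP : IsPM G P) (f : V → ℕ) :
    Odd #{e ∈ P | Odd (∑ v ∈ e.toFinset, f v)} ↔ Odd (∑ v, f v) := by
  have edge_sums : ∑ e ∈ P, ∑ v ∈ e.toFinset, f v = ∑ v, f v :=
    sum_sum_eq_sum_of_existsUnique_mem (by simpa only [Sym2.mem_toFinset] using hP.2) f
  rw [← odd_sum_iff_odd_card_odd, edge_sums]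

theorem exists_mk_eq_and_apply_ne_iff {V α : Type*} (f : V → α) (a b : V) :
    (∃ p q, s(a, b) = s(p, q) ∧ f p ≠ f q) ↔ f a ≠ f b := by
  refine ⟨?_, fun hne => ⟨a, b, rfl, hne⟩⟩
  rintro ⟨p, q, heq, hne⟩
  obtain ⟨rfl, rfl⟩ | ⟨rfl, rfl⟩ := Sym2.eq_iff.1 heq
  exacts [hne, hne.symm]

section Grid

variable {m n : ℕ}

theorem odd_row_add_row_iff_of_grid_adj {p q : Fin m × Fin n} (hpq : (grid m n).Adj p q) :
    Odd ((p.1 : ℕ) + q.1) ↔ p.1 ≠ q.1 := by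
  have rows_close : (p.1 : ℕ) = q.1 ∨ (p.1 : ℕ) + 1 = q.1 ∨ (q.1 : ℕ) + 1 = p.1 := by
    rw [grid, SimpleGraph.fromRel_adj] at hpq
    grind
  rw [Nat.odd_iff, ne_eq, Fin.ext_iff]
  lia

theorem odd_sum_rows_iff_of_mem_edgeSet_grid {e : Sym2 (Fin m × Fin n)}
    (he : e ∈ (grid m n).edgeSet) :
    Odd (∑ v ∈ e.toFinset, (v.1 : ℕ)) ↔ ∃ p q : Fin m × Fin n, e = s(p, q) ∧ p.1 ≠ q.1 := by
  induction e with
  | _ a b =>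
    have hab : (grid m n).Adj a b := he
    rw [Sym2.toFinset_mk_eq, sum_pair hab.ne, odd_row_add_row_iff_of_grid_adj hab,
      exists_mk_eq_and_apply_ne_iff Prod.fst]

theorem vert_eq_card_filter_odd_sum_rows {P : Finset (Sym2 (Fin m × Fin n))}
    (hP : ∀ e ∈ P, e ∈ (grid m n).edgeSet) :
    vert P = #{e ∈ P | Odd (∑ v ∈ e.toFinset, (v.1 : ℕ))} := by
  classical
  exact congrArg card
    (filter_congr fun e he => (odd_sum_rows_iff_of_mem_edgeSet_grid (hP e he)).symm)

end Grid

theorem sum_rows (m n : ℕ) : ∑ v : Fin m × Fin n, (v.1 : ℕ) = n * (m * (m - 1) / 2) := by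
  calc ∑ v : Fin m × Fin n, (v.1 : ℕ)
      = ∑ i : Fin m, n * (i : ℕ) := by simp [Fintype.sum_prod_type]
    _ = n * ∑ i ∈ range m, i := by rw [← mul_sum, Fin.sum_univ_eq_sum_range fun i => i]
    _ = n * (m * (m - 1) / 2) := by rw [sum_range_id]

/-- In any perfect matching of the m-by-n grid graph, the total number of vertical
edges is congruent to n·m·(m−1)/2 mod 2. -/
theorem total_vertical_parity (m n : ℕ) (hm : 1 ≤ m) (hn : 1 ≤ n)
    (P : Finset (Sym2 (Fin m × Fin n))) (hP : IsPM (grid m n) P) :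
    vert P ≡ n * (m * (m - 1) / 2) [MOD 2] := by
  have parity : Odd (vert P) ↔ Odd (n * (m * (m - 1) / 2)) := by
    rw [vert_eq_card_filter_odd_sum_rows hP.1, hP.odd_card_filter_odd_sum_iff, sum_rows]
  rw [Nat.odd_iff, Nat.odd_iff] at parity
  unfold Nat.ModEq
  lia
end

section
/- Let m ≥ 1 and a, b ≥ 0, and let H be the weighted graph on vertex set Fin m × Fin (a+b+4) whose horizontal edges are all pairs {(i,j),(i,j+1)} (weight +1) and whose vertical edges are the pairs {(i,j),(i+1,j)} with j ∈ {1,…,a} ∪ {a+3,…,a+b+2} (0-indexed), each of weight −1. (H is the adjunction G(m,−a)G(m,−b) of the two signed graphs.) Then the signed number of perfect matchings of H, i.e., the sum over perfect matchings of (−1)^(number of vertical edges), equals M(G(m,−(a+b))). -/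
open Finset

open scoped Classical in
/-- The finset of all perfect matchings of a graph on a finite vertex type. -/
noncomputable def pmFinset {V : Type*} [Fintype V] [DecidableEq V]
    (G : SimpleGraph V) : Finset (Finset (Sym2 V)) :=
  Finset.univ.filter (fun P => IsPM G P)

/-- The underlying graph of the signed graph `G(m,-k)`: all horizontal edges, and
vertical edges only in columns 1 through k (0-indexed). -/
def negGrid (m k : ℕ) : SimpleGraph (Fin m × Fin (k + 2)) :=
  SimpleGraph.fromRel (fun p q =>
    (p.1 = q.1 ∧ (p.2 : ℕ) + 1 = q.2) ∨
    (p.2 = q.2 ∧ (p.1 : ℕ) + 1 = q.1 ∧ 1 ≤ (p.2 : ℕ) ∧ (p.2 : ℕ) ≤ k))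

/-- The signed number of matchings `M(G(m,-k))`: every vertical edge has weight -1,
every horizontal edge weight +1. -/
noncomputable def Msigned (m k : ℕ) : ℤ :=
  ∑ P ∈ pmFinset (negGrid m k), (-1 : ℤ) ^ vert P


/-- The adjunction `G(m,-a)G(m,-b)`: the graph on `Fin m × Fin (a+b+4)` with all
horizontal edges (weight +1) and vertical edges of weight -1 exactly in columns
`1,…,a` and `a+3,…,a+b+2` (0-indexed). -/
def adjoinNegNeg (m a b : ℕ) : SimpleGraph (Fin m × Fin (a + b + 4)) :=
  SimpleGraph.fromRel (fun p q =>
    (p.1 = q.1 ∧ (p.2 : ℕ) + 1 = q.2) ∨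
    (p.2 = q.2 ∧ (p.1 : ℕ) + 1 = q.1 ∧
      ((1 ≤ (p.2 : ℕ) ∧ (p.2 : ℕ) ≤ a) ∨ (a + 3 ≤ (p.2 : ℕ) ∧ (p.2 : ℕ) ≤ a + b + 2))))

/-!
Insert two vertices in the middle of an edge `{u, v}` of a graph, so that it becomes a path
`u – x – y – v`. A perfect matching contains either both outer edges of the path or the middle edge
alone; these two cases correspond to the perfect matchings that do and do not contain `{u, v}`.
So this double subdivision preserves weighted matching counts, as long as the weights of the two
outer edges multiply to the weight of `{u, v}` and the middle edge has weight `1`.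

The adjunction `G(m,-a)G(m,-b)` is the double subdivision of `G(m,-(a+b))` along the `m` horizontal
edges between columns `a` and `a + 1`, all of which have weight `1`.
-/

/-- A perfect matching of `G`, encoded as the map sending each vertex to the vertex it is
matched with. -/
@[ext]
structure MateMap {V : Type*} (G : SimpleGraph V) where
  mate : V → V
  mate_mate : ∀ v, mate (mate v) = v
  adj_mate : ∀ v, G.Adj v (mate v)

namespace MateMap

variable {V W : Type*} {G : SimpleGraph V} {H : SimpleGraph W}

theorem mate_injective : Function.Injective (mate : MateMap G → V → V) :=
  fun _ _ => MateMap.ext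

noncomputable instance [Finite V] : Fintype (MateMap G) :=
  @Fintype.ofFinite _ (Finite.of_injective mate mate_injective)

/-- The transport of a perfect matching along a graph isomorphism. -/
def map (e : G ≃g H) (f : MateMap G) : MateMap H where
  mate w := e (f.mate (e.symm w))
  mate_mate w := by simp [f.mate_mate]
  adj_mate w := by simpa using e.map_adj_iff.2 (f.adj_mate (e.symm w))

/-- Graph isomorphisms induce bijections between perfect matchings. -/
def congr (e : G ≃g H) : MateMap G ≃ MateMap H where
  toFun := map e
  invFun := map e.symm
  left_inv f := by ext; simp [map]
  right_inv f := by ext; simp [map]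

section Edges

variable [Fintype V] [DecidableEq V]

/-- The edge set of the perfect matching encoded by `f`. -/
def edges (f : MateMap G) : Finset (Sym2 V) :=
  univ.image fun v => s(v, f.mate v)

theorem mk_mem_edges {f : MateMap G} {u v : V} : s(u, v) ∈ f.edges ↔ f.mate u = v := by
  simp only [edges, mem_image, mem_univ, true_and]
  constructor
  · rintro ⟨w, hw⟩
    rcases Sym2.eq_iff.1 hw with ⟨rfl, rfl⟩ | ⟨rfl, rfl⟩
    exacts [rfl, f.mate_mate _]
  · rintro rfl
    exact ⟨u, rfl⟩

theorem edges_injective : Function.Injective (edges : MateMap G → Finset (Sym2 V)) := by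
  intro f g hfg
  ext v
  exact (mk_mem_edges.1 (hfg ▸ mk_mem_edges.2 rfl : s(v, f.mate v) ∈ g.edges)).symm

theorem isPM_edges (f : MateMap G) : IsPM G f.edges := by
  constructor
  · intro e he
    obtain ⟨v, -, rfl⟩ := mem_image.1 he
    exact f.adj_mate v
  · intro v
    refine ⟨s(v, f.mate v), ⟨mk_mem_edges.2 rfl, Sym2.mem_mk_left _ _⟩, ?_⟩
    rintro e ⟨he, hve⟩
    obtain ⟨w, rfl⟩ := hve
    rw [mk_mem_edges.1 he]

end Edges

end MateMap

section PerfectMatchings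

variable {V : Type*} [Fintype V] [DecidableEq V] {G : SimpleGraph V}

theorem IsPM.exists_edges_eq {P : Finset (Sym2 V)} (hP : IsPM G P) :
    ∃ f : MateMap G, f.edges = P := by
  obtain ⟨hPG, hcover⟩ := hP
  have exists_mate (v : V) : ∃ w, s(v, w) ∈ P := by
    obtain ⟨_, ⟨he, w, rfl⟩, -⟩ := hcover v
    exact ⟨w, he⟩
  choose mate mem_mate using exists_mate
  have eq_mate {v w : V} (h : s(v, w) ∈ P) : w = mate v :=
    Sym2.congr_right.1 <| (hcover v).unique ⟨h, Sym2.mem_mk_left _ _⟩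
      ⟨mem_mate v, Sym2.mem_mk_left _ _⟩
  let f : MateMap G :=
    { mate
      mate_mate v := (eq_mate (Sym2.eq_swap ▸ mem_mate v)).symm
      adj_mate v := hPG _ (mem_mate v) }
  refine ⟨f, ?_⟩
  ext ⟨u, v⟩
  rw [MateMap.mk_mem_edges]
  exact ⟨fun h => h ▸ mem_mate u, fun h => (eq_mate h).symm⟩

theorem mem_pmFinset {P : Finset (Sym2 V)} : P ∈ pmFinset G ↔ IsPM G P := by
  simp only [pmFinset, mem_filter, mem_univ, true_and]

theorem sum_pmFinset_eq_sum_mateMap {R : Type*} [AddCommMonoid R] (w : Finset (Sym2 V) → R) :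
    ∑ P ∈ pmFinset G, w P = ∑ f : MateMap G, w f.edges := by
  symm
  refine sum_nbij MateMap.edges ?_ MateMap.edges_injective.injOn ?_ fun _ _ => rfl
  · intro f _
    exact mem_pmFinset.2 f.isPM_edges
  · intro P hP
    obtain ⟨f, rfl⟩ := (mem_pmFinset.1 hP).exists_edges_eq
    exact ⟨f, mem_coe.2 (mem_univ f), rfl⟩

end PerfectMatchings

section MatchingSum

variable {V W R : Type*} [Fintype V] [Fintype W] [CommSemiring R]

/-- The weighted number of perfect matchings of `G`. Weights are given to oriented edges, so that an
edge `{u, v}` contributes the factor `ω u v * ω v u`. -/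
noncomputable def matchingSum (G : SimpleGraph V) (ω : V → V → R) : R :=
  ∑ f : MateMap G, ∏ v, ω v (f.mate v)

theorem matchingSum_eq_of_iso {G : SimpleGraph V} {H : SimpleGraph W} (e : G ≃g H)
    {ω : V → V → R} {ω' : W → W → R} (hω : ∀ u v, G.Adj u v → ω u v = ω' (e u) (e v)) :
    matchingSum G ω = matchingSum H ω' := by
  refine Fintype.sum_equiv (MateMap.congr e) _ _ fun f => ?_
  refine Fintype.prod_equiv e.toEquiv _ _ fun v => ?_
  simpa [MateMap.congr, MateMap.map] using hω v (f.mate v) (f.adj_mate v)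

end MatchingSum

section DoubleSubdivision

variable {V : Type*} {G F : SimpleGraph V}

/-- The graph obtained from `G` by replacing each edge of `F` by a path with three edges. The new
vertices are the darts of `F`: on the path replacing `{u, v}`, the dart `(u, v)` is the neighbour of
`u` and the dart `(v, u)` the neighbour of `v`. -/
def doubleSubdivision (G F : SimpleGraph V) : SimpleGraph (V ⊕ F.Dart) where
  Adj
    | .inl u, .inl v => (G \ F).Adj u v
    | .inl u, .inr d => d.fst = u
    | .inr d, .inl v => d.fst = v
    | .inr d, .inr d' => d' = d.symm
  symm := ⟨by
    rintro (u | d) (v | d') h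
    · exact h.symm
    · exact h
    · exact h
    · subst h
      exact d.symm_symm.symm⟩
  loopless := ⟨by
    rintro (v | d) h
    · exact h.ne rfl
    · exact d.symm_ne h.symm⟩

section Adj

variable {u v : V} {d d' : F.Dart}

@[simp]
theorem doubleSubdivision_adj_inl_inl :
    (doubleSubdivision G F).Adj (.inl u) (.inl v) ↔ G.Adj u v ∧ ¬F.Adj u v := Iff.rfl

@[simp]
theorem doubleSubdivision_adj_inl_inr :
    (doubleSubdivision G F).Adj (.inl u) (.inr d) ↔ d.fst = u := Iff.rfl

@[simp]
theorem doubleSubdivision_adj_inr_inl :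
    (doubleSubdivision G F).Adj (.inr d) (.inl v) ↔ d.fst = v := Iff.rfl

@[simp]
theorem doubleSubdivision_adj_inr_inr :
    (doubleSubdivision G F).Adj (.inr d) (.inr d') ↔ d' = d.symm := Iff.rfl

end Adj

namespace MateMap

theorem mate_inr_eq_or (g : MateMap (doubleSubdivision G F)) (d : F.Dart) :
    g.mate (.inr d) = .inl d.fst ∨ g.mate (.inr d) = .inr d.symm := by
  have h := g.adj_mate (.inr d)
  rcases hd : g.mate (.inr d) with v | d' <;> rw [hd] at h
  · exact .inl (congrArg _ (doubleSubdivision_adj_inr_inl.1 h).symm)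
  · exact .inr (congrArg _ (doubleSubdivision_adj_inr_inr.1 h))

theorem fst_eq_of_mate_inl {g : MateMap (doubleSubdivision G F)} {v : V} {d : F.Dart}
    (h : g.mate (.inl v) = .inr d) : d.fst = v := by
  simpa only [h, doubleSubdivision_adj_inl_inr] using g.adj_mate (.inl v)

theorem adj_and_not_adj_of_mate_inl {g : MateMap (doubleSubdivision G F)} {u v : V}
    (h : g.mate (.inl v) = .inl u) : G.Adj v u ∧ ¬F.Adj v u := by
  simpa only [h, doubleSubdivision_adj_inl_inl] using g.adj_mate (.inl v)

theorem mate_inl_snd_of_mate_inl {g : MateMap (doubleSubdivision G F)} {v : V} {d : F.Dart}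
    (h : g.mate (.inl v) = .inr d) : g.mate (.inl d.snd) = .inr d.symm := by
  have hd : g.mate (.inr d) = .inl v := h ▸ g.mate_mate _
  rcases g.mate_inr_eq_or d.symm with hsymm | hsymm
  · exact hsymm ▸ g.mate_mate (.inr d.symm)
  · have := g.mate_mate (.inr d.symm)
    rw [hsymm, d.symm_symm, hd] at this
    cases this

open scoped Classical in
/-- The perfect matching of the double subdivision induced by a perfect matching of `G`: on each
path it consists of the two outer edges or of the middle edge, according to whether the subdivided
edge was in the matching. -/
noncomputable def subdivide (F : SimpleGraph V) (f : MateMap G) :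
    MateMap (doubleSubdivision G F) where
  mate
    | .inl v => if h : F.Adj v (f.mate v) then .inr ⟨(v, f.mate v), h⟩ else .inl (f.mate v)
    | .inr d => if f.mate d.fst = d.snd then .inl d.fst else .inr d.symm
  mate_mate := by
    rintro (v | d)
    · by_cases h : F.Adj v (f.mate v)
      · simp [h]
      · simp [h, f.mate_mate, F.adj_comm]
    · by_cases h : f.mate d.fst = d.snd
      · simp [h]
      · have hsymm : f.mate d.snd ≠ d.fst := fun h' => h (h' ▸ f.mate_mate _)
        simp [h, hsymm]
  adj_mate := by
    rintro (v | d)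
    · by_cases h : F.Adj v (f.mate v)
      · simp [h]
      · simp [h, f.adj_mate]
    · by_cases h : f.mate d.fst = d.snd <;> simp [h]

/-- The perfect matching of `G` induced by a perfect matching of its double subdivision, by
contracting each path to the edge it replaced. -/
def contract (hF : F ≤ G) (g : MateMap (doubleSubdivision G F)) : MateMap G where
  mate v := (g.mate (.inl v)).elim id (·.snd)
  mate_mate v := by
    rcases h : g.mate (.inl v) with u | d
    · have : g.mate (.inl u) = .inl v := h ▸ g.mate_mate _
      simp [this]
    · simp [mate_inl_snd_of_mate_inl h, fst_eq_of_mate_inl h]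
  adj_mate v := by
    rcases h : g.mate (.inl v) with u | d
    · exact (adj_and_not_adj_of_mate_inl h).1
    · exact fst_eq_of_mate_inl h ▸ hF d.adj

theorem contract_mate_fst_eq_snd_iff {hF : F ≤ G} {g : MateMap (doubleSubdivision G F)}
    {d : F.Dart} : (g.contract hF).mate d.fst = d.snd ↔ g.mate (.inr d) = .inl d.fst := by
  constructor
  · intro hd
    rcases h : g.mate (.inl d.fst) with u | d'
    · have hu : u = d.snd := by simpa [contract, h] using hd
      exact absurd d.adj (hu ▸ adj_and_not_adj_of_mate_inl h).2
    · have hd' : d'.snd = d.snd := by simpa [contract, h] using hd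
      obtain rfl : d' = d := SimpleGraph.Dart.ext _ _ (Prod.ext (fst_eq_of_mate_inl h) hd')
      exact h ▸ g.mate_mate _
  · intro h
    have hd : g.mate (.inl d.fst) = .inr d := h ▸ g.mate_mate _
    simp [contract, hd]

theorem contract_subdivide (hF : F ≤ G) (f : MateMap G) : (f.subdivide F).contract hF = f := by
  ext v
  by_cases h : F.Adj v (f.mate v) <;> simp [contract, subdivide, h]

theorem subdivide_contract (hF : F ≤ G) (g : MateMap (doubleSubdivision G F)) :
    (g.contract hF).subdivide F = g := by
  ext (v | d)
  · rcases h : g.mate (.inl v) with u | d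
    · simp [subdivide, contract, h, (adj_and_not_adj_of_mate_inl h).2]
    · obtain rfl := fst_eq_of_mate_inl h
      simp [subdivide, contract, h, d.adj]
  · rcases g.mate_inr_eq_or d with h | h <;> simp [subdivide, contract_mate_fst_eq_snd_iff, h]

/-- Double subdivision induces a bijection between perfect matchings. -/
noncomputable def subdivideEquiv (hF : F ≤ G) :
    MateMap G ≃ MateMap (doubleSubdivision G F) where
  toFun := subdivide F
  invFun := contract hF
  left_inv := contract_subdivide hF
  right_inv := subdivide_contract hF

end MateMap

/-- The weight on the double subdivision in which, on the path replacing `{u, v}`, the outer edges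
carry the oriented weights `ω u v` and `ω v u` and the middle edge has weight `1`. -/
def subdivideWeight {R : Type*} [One R] (F : SimpleGraph V) (ω : V → V → R) :
    V ⊕ F.Dart → V ⊕ F.Dart → R
  | .inl u, .inl v => ω u v
  | .inl _, .inr d => ω d.fst d.snd
  | .inr _, _ => 1

theorem matchingSum_doubleSubdivision {R : Type*} [CommSemiring R] [Fintype V] [Fintype F.Dart]
    (hF : F ≤ G) (ω : V → V → R) :
    matchingSum (doubleSubdivision G F) (subdivideWeight F ω) = matchingSum G ω := by
  symm
  refine Fintype.sum_equiv (MateMap.subdivideEquiv hF) _ _ fun f => ?_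
  rw [Fintype.prod_sum_type]
  have prod_new : ∏ d : F.Dart,
      subdivideWeight F ω (.inr d) ((f.subdivide F).mate (.inr d)) = 1 :=
    prod_eq_one fun _ _ => rfl
  have weight_old (v : V) :
      subdivideWeight F ω (.inl v) ((f.subdivide F).mate (.inl v)) = ω v (f.mate v) := by
    by_cases h : F.Adj v (f.mate v) <;> simp [MateMap.subdivide, subdivideWeight, h]
  simp only [MateMap.subdivideEquiv, Equiv.coe_fn_mk, prod_new, weight_old, mul_one]

end DoubleSubdivision

section ColumnGrid

variable {m n : ℕ}

/-- The weight `-1` for vertical edges and `1` for horizontal ones; the sign is carried by the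
downward orientation of an edge. -/
def verticalSign (p q : Fin m × Fin n) : ℤ :=
  if p.1 < q.1 then -1 else 1

theorem verticalSign_of_fst_eq {p q : Fin m × Fin n} (h : p.1 = q.1) : verticalSign p q = 1 :=
  if_neg h.not_lt

theorem vert_edges {G : SimpleGraph (Fin m × Fin n)} (f : MateMap G) :
    vert f.edges = #{v | v.1 < (f.mate v).1} := by
  classical
  symm
  refine card_nbij (fun v => s(v, f.mate v)) ?_ ?_ ?_
  · intro v hv
    have hlt : v.1 < (f.mate v).1 := (mem_filter.1 hv).2
    exact mem_filter.2 ⟨MateMap.mk_mem_edges.2 rfl, v, f.mate v, rfl, hlt.ne⟩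
  · intro v hv w hw hvw
    have hv : v.1 < (f.mate v).1 := by simpa using hv
    have hw : w.1 < (f.mate w).1 := by simpa using hw
    rcases Sym2.eq_iff.1 hvw with ⟨h, -⟩ | ⟨h, h'⟩
    · exact h
    · exact absurd hv (h' ▸ h ▸ hw.not_gt)
  · rintro _ he
    obtain ⟨he, p, q, rfl, hne⟩ := mem_filter.1 he
    obtain rfl := MateMap.mk_mem_edges.1 he
    rcases lt_or_gt_of_ne hne with h | h
    · exact ⟨p, by simpa using h, rfl⟩
    · exact ⟨f.mate p, by simpa [f.mate_mate] using h, by simp [f.mate_mate, Sym2.eq_swap]⟩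

theorem sum_neg_one_pow_vert (G : SimpleGraph (Fin m × Fin n)) :
    ∑ P ∈ pmFinset G, (-1 : ℤ) ^ vert P = matchingSum G verticalSign := by
  rw [sum_pmFinset_eq_sum_mateMap]
  refine sum_congr rfl fun f _ => ?_
  simp only [vert_edges, verticalSign, prod_ite, prod_const, one_pow, mul_one]

/-- The grid with `m` rows and `n` columns that has all horizontal edges, and vertical edges exactly
in the columns belonging to `S`. -/
def columnGrid (m n : ℕ) (S : Set ℕ) : SimpleGraph (Fin m × Fin n) :=
  SimpleGraph.fromRel fun p q =>
    (p.1 = q.1 ∧ (p.2 : ℕ) + 1 = q.2) ∨ (p.2 = q.2 ∧ (p.1 : ℕ) + 1 = q.1 ∧ (p.2 : ℕ) ∈ S)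

/-- The horizontal edges between the columns `c` and `c + 1`. -/
def columnGap (m n c : ℕ) : SimpleGraph (Fin m × Fin n) :=
  SimpleGraph.fromRel fun p q => p.1 = q.1 ∧ (p.2 : ℕ) = c ∧ (q.2 : ℕ) = c + 1

/-- The renumbering of columns when two new columns `c + 1` and `c + 2` are inserted after
column `c`. -/
def widen (c j : ℕ) : ℕ :=
  if j ≤ c then j else j + 2

theorem widen_injective (c : ℕ) : Function.Injective (widen c) := by
  intro i j h
  unfold widen at h
  grind

theorem columnGrid_adj {S : Set ℕ} {p q : Fin m × Fin n} :
    (columnGrid m n S).Adj p q ↔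
      (p.1 = q.1 ∧ ((p.2 : ℕ) + 1 = q.2 ∨ (q.2 : ℕ) + 1 = p.2)) ∨
        (p.2 = q.2 ∧ (p.2 : ℕ) ∈ S ∧ ((p.1 : ℕ) + 1 = q.1 ∨ (q.1 : ℕ) + 1 = p.1)) := by
  simp only [columnGrid, SimpleGraph.fromRel_adj]
  grind

theorem columnGap_adj {c : ℕ} {p q : Fin m × Fin n} :
    (columnGap m n c).Adj p q ↔
      p.1 = q.1 ∧ ((p.2 : ℕ) = c ∧ (q.2 : ℕ) = c + 1 ∨ (p.2 : ℕ) = c + 1 ∧ (q.2 : ℕ) = c) := by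
  simp only [columnGap, SimpleGraph.fromRel_adj]
  grind

theorem columnGap_le_columnGrid (m n c : ℕ) (S : Set ℕ) :
    columnGap m n c ≤ columnGrid m n S := by
  intro p q h
  rw [columnGap_adj] at h
  rw [columnGrid_adj]
  omega

theorem columnGap_dart_fst_column {c : ℕ} (d : (columnGap m n c).Dart) :
    (d.fst.2 : ℕ) = c ∨ (d.fst.2 : ℕ) = c + 1 :=
  (columnGap_adj.1 d.adj).2.imp And.left And.left

theorem columnGap_dart_eq_of_fst_eq {c : ℕ} {d d' : (columnGap m n c).Dart}
    (h : d.fst = d'.fst) : d = d' := by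
  have hd := columnGap_adj.1 d.adj
  have hd' := columnGap_adj.1 d'.adj
  refine SimpleGraph.Dart.ext _ _ (Prod.ext h ?_)
  grind

/-- The position of a vertex of the double subdivision along the gap after column `c` in the grid
with two more columns. -/
def widenVertex (c : ℕ) : (Fin m × Fin n) ⊕ (columnGap m n c).Dart → Fin m × Fin (n + 2)
  | .inl p => (p.1, ⟨widen c p.2, by unfold widen; split <;> omega⟩)
  | .inr d => (d.fst.1, ⟨d.fst.2 + 1, by omega⟩)

theorem widenVertex_injective (c : ℕ) :
    Function.Injective (widenVertex c : _ → Fin m × Fin (n + 2)) := by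
  rintro (p | d) (q | d') h <;>
    simp only [widenVertex, widen, Prod.ext_iff, Fin.ext_iff] at h
  · congr 1
    grind
  · have := columnGap_dart_fst_column d'
    grind
  · have := columnGap_dart_fst_column d
    grind
  · congr 1
    apply columnGap_dart_eq_of_fst_eq
    grind

theorem widenVertex_surjective {c : ℕ} (hc : c + 1 < n) :
    Function.Surjective (widenVertex c : _ → Fin m × Fin (n + 2)) := by
  rintro ⟨i, j, hj⟩
  have gap : (columnGap m n c).Adj (i, ⟨c, by omega⟩) (i, ⟨c + 1, hc⟩) := by
    simp [columnGap_adj]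
  obtain h | rfl | rfl | h : j ≤ c ∨ j = c + 1 ∨ j = c + 2 ∨ c + 3 ≤ j := by omega
  · exact ⟨.inl (i, ⟨j, by omega⟩), by simp [widenVertex, widen, h]⟩
  · exact ⟨.inr ⟨(_, _), gap⟩, rfl⟩
  · exact ⟨.inr ⟨(_, _), gap.symm⟩, rfl⟩
  · refine ⟨.inl (i, ⟨j - 2, by omega⟩), ?_⟩
    simp only [widenVertex, widen, Prod.ext_iff, Fin.ext_iff]
    grind

theorem columnGrid_adj_widenVertex_inl_inl {c : ℕ} {S : Set ℕ} {p q : Fin m × Fin n} :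
    (columnGrid m (n + 2) (widen c '' S)).Adj (widenVertex c (.inl p)) (widenVertex c (.inl q)) ↔
      (columnGrid m n S).Adj p q ∧ ¬(columnGap m n c).Adj p q := by
  simp only [columnGrid_adj, columnGap_adj, widenVertex, (widen_injective c).mem_set_image,
    Fin.ext_iff, (widen_injective c).eq_iff]
  unfold widen
  grind

theorem columnGrid_adj_widenVertex_inl_inr {c : ℕ} {S : Set ℕ} {p : Fin m × Fin n}
    {d : (columnGap m n c).Dart} :
    (columnGrid m (n + 2) (widen c '' S)).Adj (widenVertex c (.inl p)) (widenVertex c (.inr d)) ↔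
      d.fst = p := by
  have hd := columnGap_dart_fst_column d
  simp only [columnGrid_adj, widenVertex, Prod.ext_iff, Fin.ext_iff, widen]
  grind

theorem columnGrid_adj_widenVertex_inr_inr {c : ℕ} {S : Set ℕ} {d d' : (columnGap m n c).Dart} :
    (columnGrid m (n + 2) (widen c '' S)).Adj (widenVertex c (.inr d)) (widenVertex c (.inr d')) ↔
      d' = d.symm := by
  have no_vertical : (d.fst.2 : ℕ) + 1 ∉ widen c '' S := by
    rintro ⟨j, -, hj⟩
    have := columnGap_dart_fst_column d
    unfold widen at hj
    grind
  have hd := columnGap_adj.1 d.adj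
  have hd' := columnGap_dart_fst_column d'
  have eq_symm_iff : d' = d.symm ↔ d'.fst = d.snd :=
    ⟨fun h => h ▸ rfl, fun h => columnGap_dart_eq_of_fst_eq h⟩
  simp only [columnGrid_adj, widenVertex, no_vertical, eq_symm_iff, Prod.ext_iff, Fin.ext_iff]
  grind

theorem columnGrid_adj_widenVertex_iff {c : ℕ} (S : Set ℕ)
    (x y : (Fin m × Fin n) ⊕ (columnGap m n c).Dart) :
    (columnGrid m (n + 2) (widen c '' S)).Adj (widenVertex c x) (widenVertex c y) ↔
      (doubleSubdivision (columnGrid m n S) (columnGap m n c)).Adj x y := by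
  rcases x with p | d <;> rcases y with q | d'
  · exact columnGrid_adj_widenVertex_inl_inl
  · exact columnGrid_adj_widenVertex_inl_inr
  · exact (SimpleGraph.adj_comm _ _ _).trans columnGrid_adj_widenVertex_inl_inr
  · exact columnGrid_adj_widenVertex_inr_inr

/-- Inserting two columns without vertical edges after column `c` subdivides the edges between the
columns `c` and `c + 1`. -/
noncomputable def widenIso {c : ℕ} (hc : c + 1 < n) (S : Set ℕ) :
    doubleSubdivision (columnGrid m n S) (columnGap m n c) ≃g
      columnGrid m (n + 2) (widen c '' S) where
  toEquiv := .ofBijective (widenVertex c) ⟨widenVertex_injective c, widenVertex_surjective hc⟩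
  map_rel_iff' {x y} := columnGrid_adj_widenVertex_iff S x y

theorem verticalSign_widenVertex {c : ℕ} {S : Set ℕ}
    {x y : (Fin m × Fin n) ⊕ (columnGap m n c).Dart}
    (h : (doubleSubdivision (columnGrid m n S) (columnGap m n c)).Adj x y) :
    verticalSign (widenVertex c x) (widenVertex c y) =
      subdivideWeight (columnGap m n c) verticalSign x y := by
  have fst_eq (d : (columnGap m n c).Dart) : d.fst.1 = d.snd.1 := (columnGap_adj.1 d.adj).1
  rcases x with u | d <;> rcases y with v | d'
  · rfl
  · obtain rfl : d'.fst = u := h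
    exact (verticalSign_of_fst_eq rfl).trans (verticalSign_of_fst_eq (fst_eq d')).symm
  · obtain rfl : d.fst = v := h
    exact verticalSign_of_fst_eq rfl
  · obtain rfl : d' = d.symm := h
    exact verticalSign_of_fst_eq (fst_eq d)

theorem matchingSum_columnGrid_widen {c : ℕ} (hc : c + 1 < n) (S : Set ℕ) :
    matchingSum (columnGrid m (n + 2) (widen c '' S)) verticalSign =
      matchingSum (columnGrid m n S) verticalSign := by
  classical
  calc matchingSum (columnGrid m (n + 2) (widen c '' S)) verticalSign
      = matchingSum (doubleSubdivision (columnGrid m n S) (columnGap m n c))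
          (subdivideWeight (columnGap m n c) verticalSign) :=
        (matchingSum_eq_of_iso (widenIso hc S) fun _ _ h => (verticalSign_widenVertex h).symm).symm
    _ = matchingSum (columnGrid m n S) verticalSign :=
        matchingSum_doubleSubdivision (columnGap_le_columnGrid m n c S) verticalSign

theorem widen_image_Icc (a b : ℕ) :
    widen a '' Set.Icc 1 (a + b) = Set.Icc 1 a ∪ Set.Icc (a + 3) (a + b + 2) := by
  ext j
  simp only [Set.mem_image, Set.mem_union, Set.mem_Icc, widen]
  constructor
  · grind
  · rintro (h | h)
    · exact ⟨j, by grind⟩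
    · exact ⟨j - 2, by grind⟩

theorem negGrid_eq_columnGrid (m k : ℕ) : negGrid m k = columnGrid m (k + 2) (Set.Icc 1 k) := rfl

theorem adjoinNegNeg_eq_columnGrid (m a b : ℕ) :
    adjoinNegNeg m a b = columnGrid m (a + b + 2 + 2) (widen a '' Set.Icc 1 (a + b)) := by
  rw [widen_image_Icc]
  rfl

end ColumnGrid

/-- The signed matching count of the adjunction `G(m,-a)G(m,-b)` equals
`M(G(m,-(a+b)))`. -/
theorem adjunction_neg_neg (m a b : ℕ) (hm : 1 ≤ m) :
    ∑ P ∈ pmFinset (adjoinNegNeg m a b), (-1 : ℤ) ^ vert P = Msigned m (a + b) := by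
  calc ∑ P ∈ pmFinset (adjoinNegNeg m a b), (-1 : ℤ) ^ vert P
      = matchingSum (columnGrid m (a + b + 2 + 2) (widen a '' Set.Icc 1 (a + b))) verticalSign := by
        rw [sum_neg_one_pow_vert, adjoinNegNeg_eq_columnGrid]
    _ = matchingSum (columnGrid m (a + b + 2) (Set.Icc 1 (a + b))) verticalSign :=
        matchingSum_columnGrid_widen (by omega) _
    _ = Msigned m (a + b) := by
        rw [Msigned, sum_neg_one_pow_vert, negGrid_eq_columnGrid]
end
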